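/- Let M be a contractible topological n-manifold without boundary with n ≥ 2. Then M has one end, in the following sense: for every compact subset K of M there exists a compact subset K' of M with K ⊆ K' such that the complement M \ K' is connected. -/

import Mathlib

section

open Set Filter Topology

namespace OneEnd

/-- Alexander-Spanier type cochains mod 2 (all degrees at once). -/
abbrev Co (X : Type*) := List X → ZMod 2

variable {X Y : Type*}

def dAux : List X → Co X → ZMod 2
  | [], _ => 0
  | a :: l, η => η l + dAux l (fun l' => η (a :: l'))

def d (η : Co X) : Co X := fun l => dAux l η

@[simp] lemma d_nil (η : Co X) : d η [] = 0 := rfl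
lemma d_cons (η : Co X) (a : X) (l : List X) :
    d η (a :: l) = η l + d (fun l' => η (a :: l')) l := rfl

lemma z2 (x : ZMod 2) : x + x = 0 := CharTwo.add_self_eq_zero x

lemma d_add (η ζ : Co X) : d (η + ζ) = d η + d ζ := by
  funext l
  induction l generalizing η ζ with
  | nil => simp
  | cons a l ih =>
    have h := ih (fun l' => η (a :: l')) (fun l' => ζ (a :: l'))
    simp only [d_cons, Pi.add_apply] at h ⊢
    have e : (fun l' => η (a :: l') + ζ (a :: l')) =
      (fun l' => η (a :: l')) + (fun l' => ζ (a :: l')) := rfl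
    rw [e, h]; ring

@[simp] lemma d_zero : d (0 : Co X) = 0 := by
  have h := d_add (0 : Co X) 0
  simpa using h

lemma d_smul (c : ZMod 2) (η : Co X) (l : List X) : d (fun l => c * η l) l = c * d η l := by
  induction l generalizing η with
  | nil => simp
  | cons a l ih => rw [d_cons, d_cons, ih (fun l' => η (a :: l'))]; ring

lemma d_d (η : Co X) : d (d η) = 0 := by
  funext l
  induction l generalizing η with
  | nil => rfl
  | cons a l ih =>
    rw [d_cons]
    have e : (fun l' => d η (a :: l')) = η + d (fun l' => η (a :: l')) := by
      funext l'; rw [d_cons]; rfl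
    rw [e, d_add, Pi.add_apply, ih]
    simp [z2]

lemma d_congr {η ζ : Co X} {l : List X}
    (h : ∀ l' : List X, l'.length + 1 = l.length → (∀ a ∈ l', a ∈ l) → η l' = ζ l') :
    d η l = d ζ l := by
  induction l generalizing η ζ with
  | nil => rfl
  | cons a l ih =>
    rw [d_cons, d_cons, h l (by simp) (fun b hb => by simp [hb])]
    congr 1
    apply ih
    intro l' hl hm
    apply h
    · simp [hl]
    · intro b hb
      rcases List.mem_cons.1 hb with rfl | hb
      · simp
      · simp [hm b hb]

lemma d_map (f : X → Y) (η : Co Y) (l : List X) :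
    d (fun l => η (l.map f)) l = d η (l.map f) := by
  induction l generalizing η with
  | nil => rfl
  | cons a l ih =>
    rw [d_cons, List.map_cons, d_cons, ← ih (fun l' => η (f a :: l'))]
    rfl

/-- Multiply by a function of the first vertex. -/
def cut (s : X → ZMod 2) (η : Co X) : Co X
  | [] => 0
  | a :: l => s a * η (a :: l)

/-- Cup product with the coboundary of a `0`-cochain. -/
def E (s : X → ZMod 2) (η : Co X) : Co X
  | [] => 0
  | a :: l => s a * η l + cut s η l

lemma d_cut (s : X → ZMod 2) (η : Co X) : d (cut s η) = E s η + cut s (d η) := by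
  funext l
  cases l with
  | nil => rfl
  | cons a l =>
    have : (fun l' => cut s η (a :: l')) = fun l' => s a * η (a :: l') := rfl
    rw [d_cons, this, d_smul (s a) (fun l' => η (a :: l'))]
    simp only [Pi.add_apply, cut, E, d_cons]
    have := z2 (s a * η l)
    linear_combination -this

lemma cut_add (s : X → ZMod 2) (η ζ : Co X) : cut s (η + ζ) = cut s η + cut s ζ := by
  funext l
  cases l with
  | nil => simp [cut]
  | cons a l => simp [cut]; ring

lemma E_add (s : X → ZMod 2) (η ζ : Co X) : E s (η + ζ) = E s η + E s ζ := by
  funext l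
  cases l with
  | nil => simp [E]
  | cons a l => simp [E, cut_add]; ring

lemma d_E (s : X → ZMod 2) (η : Co X) : d (E s η) = E s (d η) := by
  have h := congrArg d (d_cut s η)
  rw [d_d, d_add, d_cut, d_d] at h
  have hc : cut s (0 : Co X) = 0 := by
    funext l; cases l <;> simp [cut]
  rw [hc, add_zero] at h
  funext l
  have := congrFun h l
  simp only [Pi.zero_apply, Pi.add_apply] at this
  have h3 : d (E s η) l = -E s (d η) l := by linear_combination -this
  rw [h3, ZMod.neg_eq_self_mod_two]

/-- Prism operator. -/
def prAux (f g : X → Y) : List X → Co Y → ZMod 2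
  | [], _ => 0
  | a :: l, η => η (f a :: g a :: l.map g) + prAux f g l (fun l' => η (f a :: l'))

def pr (f g : X → Y) (η : Co Y) : Co X := fun l => prAux f g l η

@[simp] lemma pr_nil (f g : X → Y) (η : Co Y) : pr f g η [] = 0 := rfl
lemma pr_cons (f g : X → Y) (η : Co Y) (a : X) (l : List X) :
    pr f g η (a :: l) = η (f a :: g a :: l.map g) + pr f g (fun l' => η (f a :: l')) l := rfl

lemma pr_add (f g : X → Y) (η ζ : Co Y) : pr f g (η + ζ) = pr f g η + pr f g ζ := by
  funext l
  induction l generalizing η ζ with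
  | nil => simp
  | cons a l ih =>
    have h := ih (fun l' => η (f a :: l')) (fun l' => ζ (f a :: l'))
    simp only [pr_cons, Pi.add_apply] at h ⊢
    have e : (fun l' => η (f a :: l') + ζ (f a :: l')) =
      (fun l' => η (f a :: l')) + (fun l' => ζ (f a :: l')) := rfl
    rw [e, h]; ring

@[simp] lemma pr_zero (f g : X → Y) : pr f g (0 : Co Y) = 0 := by
  have h := pr_add f g (0 : Co Y) 0
  simpa using h

lemma pr_smul (f g : X → Y) (c : ZMod 2) (η : Co Y) (l : List X) :
    pr f g (fun l => c * η l) l = c * pr f g η l := by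
  induction l generalizing η with
  | nil => simp
  | cons a l ih => rw [pr_cons, pr_cons, ih (fun l' => η (f a :: l'))]; ring

lemma pr_congr {f g : X → Y} {η ζ : Co Y} {l : List X}
    (h : ∀ l' : List Y, l'.length = l.length + 1 →
      (∀ b ∈ l', ∃ a ∈ l, b = f a ∨ b = g a) → η l' = ζ l') :
    pr f g η l = pr f g ζ l := by
  induction l generalizing η ζ with
  | nil => rfl
  | cons a l ih =>
    rw [pr_cons, pr_cons]
    congr 1
    · apply h
      · simp
      · intro b hb
        simp only [List.mem_cons, List.mem_map] at hb
        rcases hb with rfl | rfl | ⟨c, hc, rfl⟩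
        · exact ⟨a, by simp, Or.inl rfl⟩
        · exact ⟨a, by simp, Or.inr rfl⟩
        · exact ⟨c, by simp [hc], Or.inr rfl⟩
    · apply ih
      intro l' hl hm
      apply h
      · simp [hl]
      · intro b hb
        rcases List.mem_cons.1 hb with rfl | hb
        · exact ⟨a, by simp, Or.inl rfl⟩
        · obtain ⟨c, hc, h⟩ := hm b hb
          exact ⟨c, by simp [hc], h⟩

lemma d_pr (f g : X → Y) (η : Co Y) (l : List X) :
    d (pr f g η) l + pr f g (d η) l = η (l.map f) + η (l.map g) := by
  induction l generalizing η with
  | nil => simp [z2]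
  | cons a l ih =>
    have h := ih (fun l' => η (f a :: l'))
    rw [d_cons, pr_cons]
    have e1 : (fun l' => pr f g η (a :: l')) =
        (fun l' => (fun l'' => η (f a :: g a :: l'')) (l'.map g)) +
          pr f g (fun l' => η (f a :: l')) := by
      funext l'; rw [pr_cons]; rfl
    have e2 : (fun l' => d η (f a :: l')) = η + d (fun l' => η (f a :: l')) := by
      funext l'; rw [d_cons]; rfl
    rw [e1, e2, d_add, pr_add, Pi.add_apply, Pi.add_apply, d_map g (fun l'' => η (f a :: g a :: l'')), d_cons, d_cons]
    simp only [List.map_cons] at h ⊢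
    have h1 := z2 (pr f g η l)
    have h2 := z2 (d (fun l'' => η (f a :: g a :: l'')) (l.map g))
    have h3 := z2 (η (f a :: l.map g))
    linear_combination h + h1 + h2 + h3

@[simp] lemma cut_zero (s : X → ZMod 2) : cut s (0 : Co X) = 0 := by
  funext l; cases l <;> simp [cut]

@[simp] lemma E_zero (s : X → ZMod 2) : E s (0 : Co X) = 0 := by
  funext l; cases l <;> simp [E]

open Classical in
/-- indicator mod 2 -/
noncomputable def ind (S : Set X) : X → ZMod 2 := fun x => if x ∈ S then 1 else 0

lemma ind_mem {S : Set X} {x : X} (h : x ∈ S) : ind S x = 1 := by simp [ind, h]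
lemma ind_not_mem {S : Set X} {x : X} (h : x ∉ S) : ind S x = 0 := by simp [ind, h]

section top
variable [TopologicalSpace X] [TopologicalSpace Y]

/-- Filter of small lists of length `m` near `x`. -/
def L (m : ℕ) (x : X) : Filter (List X) :=
  (𝓝 x).lift' (fun s => {l | l.length = m ∧ ∀ a ∈ l, a ∈ s})

lemma mem_L {m : ℕ} {x : X} {S : Set (List X)} :
    S ∈ L m x ↔ ∃ O ∈ 𝓝 x, ∀ l : List X, l.length = m → (∀ a ∈ l, a ∈ O) → l ∈ S := by
  unfold L
  rw [Filter.mem_lift'_sets]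
  · constructor
    · rintro ⟨O, hO, h⟩
      exact ⟨O, hO, fun l h1 h2 => h ⟨h1, h2⟩⟩
    · rintro ⟨O, hO, h⟩
      exact ⟨O, hO, fun l hl => h l hl.1 hl.2⟩
  · intro s t hst l hl
    exact ⟨hl.1, fun a ha => hst (hl.2 a ha)⟩

lemma eqL {m : ℕ} {x : X} {η ζ : Co X} :
    η =ᶠ[L m x] ζ ↔ ∃ O ∈ 𝓝 x, ∀ l : List X, l.length = m → (∀ a ∈ l, a ∈ O) → η l = ζ l :=
  mem_L

lemma L_length {m : ℕ} {x : X} : ∀ᶠ l in L m x, l.length = m :=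
  mem_L.2 ⟨univ, univ_mem, fun _ h _ => h⟩

lemma L_mem {m : ℕ} {x : X} {S : Set X} (hS : S ∈ 𝓝 x) : ∀ᶠ l in L m x, ∀ a ∈ l, a ∈ S :=
  mem_L.2 ⟨S, hS, fun _ _ h => h⟩

lemma L_cons {m : ℕ} {x : X} : ∀ᶠ l in L (m+1) x, ∃ a l', l = a :: l' ∧ l'.length = m := by
  filter_upwards [L_length (m := m+1) (x := x)] with l hl
  cases l with
  | nil => simp at hl
  | cons a l => exact ⟨a, l, rfl, by simpa using hl⟩

lemma d_eq {m : ℕ} {x : X} {η ζ : Co X} (h : η =ᶠ[L m x] ζ) : d η =ᶠ[L (m+1) x] d ζ := by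
  obtain ⟨O, hO, h⟩ := eqL.1 h
  refine eqL.2 ⟨O, hO, fun l hl hm => d_congr fun l' hl' hm' => h l' (by omega)
    fun a ha => hm a (hm' a ha)⟩

lemma d_eq0 {m : ℕ} {x : X} {η : Co X} (h : η =ᶠ[L m x] 0) : d η =ᶠ[L (m+1) x] 0 := by
  simpa using d_eq h

lemma cut_eq {m : ℕ} {x : X} {η ζ : Co X} (s : X → ZMod 2) (h : η =ᶠ[L m x] ζ) :
    cut s η =ᶠ[L m x] cut s ζ := by
  filter_upwards [h] with l hl
  cases l with
  | nil => rfl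
  | cons a l => simp [cut, hl]

lemma E_eq {m : ℕ} {x : X} {η ζ : Co X} (s : X → ZMod 2) (h : η =ᶠ[L m x] ζ) :
    E s η =ᶠ[L (m+1) x] E s ζ := by
  obtain ⟨O, hO, h⟩ := eqL.1 h
  refine eqL.2 ⟨O, hO, fun l hl hm => ?_⟩
  cases l with
  | nil => rfl
  | cons a l =>
    have := h l (by simpa using hl) (fun b hb => hm b (by simp [hb]))
    cases l with
    | nil => simp [E, cut, this]
    | cons b l => simp [E, cut, this]

lemma cut_const {m : ℕ} {x : X} {η : Co X} {s : X → ZMod 2} {c : ZMod 2}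
    (h : ∀ᶠ y in 𝓝 x, s y = c) : cut s η =ᶠ[L (m+1) x] fun l => c * η l := by
  filter_upwards [L_cons, L_mem h] with l hl h2
  obtain ⟨a, l', rfl, -⟩ := hl
  have h3 : s a = c := h2 a (by simp)
  simp [cut, h3]

lemma E_const {m : ℕ} {x : X} {η : Co X} (h0 : η [] = 0) {s : X → ZMod 2} {c : ZMod 2}
    (h : ∀ᶠ y in 𝓝 x, s y = c) : E s η =ᶠ[L m x] 0 := by
  filter_upwards [L_mem h] with l h2
  match l, h2 with
  | [], _ => rfl
  | [a], _ => simp [E, cut, h0]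
  | a :: b :: l, h2 =>
    have ha : s a = c := h2 a (by simp)
    have hb : s b = c := h2 b (by simp)
    simp [E, cut, ha, hb, z2]

lemma cut_ind_mem {m : ℕ} {x : X} {η : Co X} {S : Set X} (h : S ∈ 𝓝 x) :
    cut (ind S) η =ᶠ[L (m+1) x] η := by
  have := cut_const (m := m) (η := η) (s := ind S) (c := 1) (x := x)
    (by filter_upwards [h] with y hy using ind_mem hy)
  simpa using this

lemma cut_ind_not_mem {m : ℕ} {x : X} {η : Co X} {S : Set X} (h : Sᶜ ∈ 𝓝 x) :
    cut (ind S) η =ᶠ[L (m+1) x] 0 := by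
  have := cut_const (m := m) (η := η) (s := ind S) (c := 0) (x := x)
    (by filter_upwards [h] with y hy using ind_not_mem hy)
  simp only [zero_mul] at this
  exact this

lemma L_nhds {m : ℕ} {x : X} {η ζ : Co X} (h : η =ᶠ[L m x] ζ) :
    ∀ᶠ y in 𝓝 x, η =ᶠ[L m y] ζ := by
  obtain ⟨O, hO, h⟩ := eqL.1 h
  filter_upwards [eventually_mem_nhds_iff.2 hO] with y hy
  exact eqL.2 ⟨O, hy, h⟩

lemma map_eq {m : ℕ} {x : X} {f : X → Y} (hf : ContinuousAt f x) {η ζ : Co Y}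
    (h : η =ᶠ[L m (f x)] ζ) :
    (fun l : List X => η (l.map f)) =ᶠ[L m x] fun l => ζ (l.map f) := by
  obtain ⟨O, hO, h⟩ := eqL.1 h
  refine eqL.2 ⟨f ⁻¹' O, hf hO, fun l hl hm => h _ (by simpa using hl) ?_⟩
  intro b hb
  obtain ⟨a, ha, rfl⟩ := List.mem_map.1 hb
  exact hm a ha

lemma cone_eq {m : ℕ} {x : X} {θ : Co X} (h : d θ =ᶠ[L (m+1) x] 0) :
    θ =ᶠ[L m x] d (fun l => θ (x :: l)) := by
  obtain ⟨O, hO, h⟩ := eqL.1 h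
  refine eqL.2 ⟨O, hO, fun l hl hm => ?_⟩
  have := h (x :: l) (by simp [hl]) (by
    intro a ha
    rcases List.mem_cons.1 ha with rfl | ha
    · exact mem_of_mem_nhds hO
    · exact hm a ha)
  rw [d_cons, Pi.zero_apply] at this
  have h2 := z2 (d (fun l => θ (x :: l)) l)
  linear_combination this - h2

end top

end OneEnd

namespace OneEnd

section supp
variable {X : Type*} [TopologicalSpace X]

/-- `η` has (germ) support in a compact subset of `W`. -/
def CS (W : Set X) (m : ℕ) (η : Co X) : Prop :=
  ∃ C : Set X, IsCompact C ∧ C ⊆ W ∧ ∀ x, x ∉ C → η =ᶠ[L m x] 0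

lemma CS.zero (W : Set X) (m : ℕ) : CS W m 0 :=
  ⟨∅, isCompact_empty, empty_subset _, fun _ _ => EventuallyEq.rfl⟩

lemma CS.add {W : Set X} {m : ℕ} {η ζ : Co X} (h : CS W m η) (h' : CS W m ζ) :
    CS W m (η + ζ) := by
  obtain ⟨C, hC, hW, h⟩ := h
  obtain ⟨C', hC', hW', h'⟩ := h'
  refine ⟨C ∪ C', hC.union hC', union_subset hW hW', fun x hx => ?_⟩
  have := (h x fun a => hx (Or.inl a)).add (h' x fun a => hx (Or.inr a))
  simpa using this

lemma CS.cut {W : Set X} {m : ℕ} {η : Co X} (h : CS W m η) (s : X → ZMod 2) :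
    CS W m (cut s η) := by
  obtain ⟨C, hC, hW, h⟩ := h
  exact ⟨C, hC, hW, fun x hx => by simpa using cut_eq s (h x hx)⟩

lemma CS.E {W : Set X} {m : ℕ} {η : Co X} (h : CS W m η) (s : X → ZMod 2) :
    CS W (m+1) (E s η) := by
  obtain ⟨C, hC, hW, h⟩ := h
  exact ⟨C, hC, hW, fun x hx => by simpa using E_eq s (h x hx)⟩

lemma CS.d {W : Set X} {m : ℕ} {η : Co X} (h : CS W m η) : CS W (m+1) (d η) := by
  obtain ⟨C, hC, hW, h⟩ := h
  exact ⟨C, hC, hW, fun x hx => d_eq0 (h x hx)⟩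

lemma CS.mono {W W' : Set X} {m : ℕ} {η : Co X} (h : CS W m η) (hW : W ⊆ W') : CS W' m η := by
  obtain ⟨C, hC, h1, h⟩ := h
  exact ⟨C, hC, h1.trans hW, h⟩

end supp

variable {n : ℕ}

/-- coordinate half space cochain -/
noncomputable def χ (j : Fin n) (t : ℝ) : (Fin n → ℝ) → ZMod 2 := ind {x | x j < t}

lemma χ_lt {j : Fin n} {t : ℝ} {x : Fin n → ℝ} (h : x j < t) :
    ∀ᶠ y in 𝓝 x, χ j t y = 1 := by
  have : ∀ᶠ y : Fin n → ℝ in 𝓝 x, y j < t :=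
    (continuous_apply j).continuousAt.eventually_lt_const h
  filter_upwards [this] with y hy using ind_mem hy

lemma χ_gt {j : Fin n} {t : ℝ} {x : Fin n → ℝ} (h : t < x j) :
    ∀ᶠ y in 𝓝 x, χ j t y = 0 := by
  have : ∀ᶠ y : Fin n → ℝ in 𝓝 x, t < y j :=
    (continuous_apply j).continuousAt.eventually_const_lt h
  filter_upwards [this] with y hy using ind_not_mem (by simpa using hy.le)

lemma χ_ne {j : Fin n} {t : ℝ} {x : Fin n → ℝ} (h : x j ≠ t) :
    ∃ c, ∀ᶠ y in 𝓝 x, χ j t y = c := by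
  rcases lt_or_gt_of_ne h with h | h
  · exact ⟨_, χ_lt h⟩
  · exact ⟨_, χ_gt h⟩

/-- The standard local class at `p`. -/
noncomputable def u : List (Fin n) → (Fin n → ℝ) → Co (Fin n → ℝ)
  | [], _ => fun l => if l = [] then 0 else 1
  | j :: js, p => E (χ j (p j)) (u js p)

@[simp] lemma u_at_nil (js : List (Fin n)) (p : Fin n → ℝ) : u js p [] = 0 := by
  cases js <;> simp [u, E]

lemma u_zero {js : List (Fin n)} {p x : Fin n → ℝ} (m : ℕ) (h : ∃ j ∈ js, x j ≠ p j) :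
    u js p =ᶠ[L m x] 0 := by
  induction js generalizing m with
  | nil => simp at h
  | cons i js ih =>
    obtain ⟨j, hj, hx⟩ := h
    rcases List.mem_cons.1 hj with rfl | hj
    · obtain ⟨c, hc⟩ := χ_ne hx
      exact E_const (u_at_nil _ _) hc
    · cases m with
      | zero =>
        filter_upwards [L_length] with l hl
        have : l = [] := List.eq_nil_of_length_eq_zero hl
        simp [this]
      | succ m =>
        have := E_eq (χ i (p i)) (ih m ⟨j, hj, hx⟩)
        rw [E_zero] at this
        exact this

lemma u_cocycle (js : List (Fin n)) (p x : Fin n → ℝ) :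
    d (u js p) =ᶠ[L (js.length + 2) x] 0 := by
  induction js with
  | nil =>
    filter_upwards [L_length] with l hl
    match l, hl with
    | [a, b], _ => 
      simp [d_cons, u, z2]
  | cons j js ih =>
    rw [u, d_E]
    simpa using E_eq (χ j (p j)) ih

lemma sum_eq_zero {X ι : Type*} {F : Filter (List X)} (P : List ι) (v : ι → Co X)
    (h : ∀ p ∈ P, v p =ᶠ[F] 0) : (P.map v).sum =ᶠ[F] 0 := by
  induction P with
  | nil => simp
  | cons p P ih =>
    have h1 := h p (by simp)
    have h2 := ih (fun q hq => h q (by simp [hq]))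
    simpa using h1.add h2

lemma E_sum {X ι : Type*} (P : List ι) (v : ι → Co X) (s : X → ZMod 2) :
    E s (P.map v).sum = (P.map fun p => E s (v p)).sum := by
  induction P with
  | nil => simp
  | cons p P ih => simp [E_add, ih]

/-- Coordinate slices. -/
def Sl (js : List (Fin n)) (a : Fin n → ℝ) : Set (Fin n → ℝ) := {x | ∀ i, i ∉ js → x i = a i}

lemma isClosed_Sl (js : List (Fin n)) (a : Fin n → ℝ) : IsClosed (Sl js a) := by
  have : Sl js a = ⋂ i, ⋂ (_ : i ∉ js), {x | x i = a i} := by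
    ext x; simp [Sl]
  rw [this]
  exact isClosed_iInter fun i => isClosed_iInter fun _ =>
    isClosed_eq (continuous_apply i) continuous_const

lemma mem_Sl_update {j : Fin n} {js : List (Fin n)} (hj : j ∉ js) {a : Fin n → ℝ} {t : ℝ}
    {x : Fin n → ℝ} : x ∈ Sl js (Function.update a j t) ↔ x ∈ Sl (j :: js) a ∧ x j = t := by
  constructor
  · intro h
    refine ⟨fun i hi => ?_, by simpa using h j hj⟩
    simp only [List.mem_cons, not_or] at hi
    have := h i hi.2
    rwa [Function.update_of_ne hi.1] at this
  · rintro ⟨h, h'⟩ i hi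
    by_cases hij : i = j
    · subst hij; simpa using h'
    · rw [Function.update_of_ne hij]
      exact h i (by simp [hij, hi])

def Gd (js : List (Fin n)) (k : ℕ) : Prop :=
  ∀ (a : Fin n → ℝ) (W : Set (Fin n → ℝ)) (θ : Co (Fin n → ℝ)) (C : Set (Fin n → ℝ)),
    IsOpen W → IsCompact C → C ⊆ W →
    (∀ x ∈ Sl js a, x ∉ C → θ =ᶠ[L (k+1) x] 0) →
    (∀ x ∈ Sl js a, d θ =ᶠ[L (k+2) x] 0) →
    ∃ (P : List (Fin n → ℝ)) (lam : Co (Fin n → ℝ)), CS W k lam ∧ lam [] = 0 ∧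
      (∀ p ∈ P, p ∈ W ∧ p ∈ Sl js a) ∧ (js.length < k → P = []) ∧
      ∀ x ∈ Sl js a, θ =ᶠ[L (k+1) x] (P.map (u js)).sum + d lam

lemma Gd_nil (k : ℕ) : Gd ([] : List (Fin n)) k := by
  intro a W θ C hW hC hCW h0 hd
  have hSl : ∀ x, x ∈ Sl [] a → x = a := fun x hx => funext fun i => hx i (by simp)
  have ha : a ∈ Sl [] a := fun i _ => rfl
  by_cases haW : a ∈ W
  swap
  · refine ⟨[], 0, CS.zero _ _, rfl, by simp, by simp, fun x hx => ?_⟩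
    rw [hSl x hx]
    simpa using h0 a ha fun h => haW (hCW h)
  cases k with
  | zero =>
    have hc : ∃ c, θ =ᶠ[L 1 a] fun _ => c := by
      refine ⟨θ [a], ?_⟩
      obtain ⟨O, hO, h⟩ := eqL.1 (hd a ha)
      refine eqL.2 ⟨O, hO, fun l hl hm => ?_⟩
      match l, hl with
      | [b], _ =>
        have := h [a, b] rfl (by
          intro c hc
          simp only [List.mem_cons, List.not_mem_nil, or_false] at hc
          rcases hc with rfl | rfl
          · exact mem_of_mem_nhds hO
          · exact hm _ (by simp))
        simp [d_cons] at this
        have h2 := z2 (θ [a])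
        linear_combination this - h2
    obtain ⟨c, hc⟩ := hc
    have : c = 0 ∨ c = 1 := (by decide : ∀ c : ZMod 2, c = 0 ∨ c = 1) c
    rcases this with rfl | rfl
    · refine ⟨[], 0, CS.zero _ _, rfl, by simp, by simp, fun x hx => ?_⟩
      rw [hSl x hx]
      filter_upwards [hc] with l hl
      simp [hl]
    · refine ⟨[a], 0, CS.zero _ _, rfl, by simp [ha, haW], by simp, fun x hx => ?_⟩
      rw [hSl x hx]
      filter_upwards [hc, L_cons] with l hl hl'
      obtain ⟨b, l', rfl, -⟩ := hl'
      simp [hl, u]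
  | succ k =>
    obtain ⟨N, hN, hNW, hNc⟩ := local_compact_nhds (hW.mem_nhds haW)
    refine ⟨[], cut (ind N) fun l => θ (a :: l), ⟨N, hNc, hNW, fun x hx => ?_⟩, rfl, by simp,
      by simp, fun x hx => ?_⟩
    · exact cut_ind_not_mem (hNc.isClosed.isOpen_compl.mem_nhds hx)
    · rw [hSl x hx]
      have h1 := cone_eq (hd a ha)
      have h2 := d_eq (cut_ind_mem (m := k) (η := fun l => θ (a :: l)) hN)
      simpa using h1.trans h2.symm

def Sol (j : Fin n) (js : List (Fin n)) (k : ℕ) (a : Fin n → ℝ) (W : Set (Fin n → ℝ))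
    (θ : Co (Fin n → ℝ)) (B J : Set ℝ) : Prop :=
  ∃ (P : List (Fin n → ℝ)) (lam : Co (Fin n → ℝ)), CS W (k+1) lam ∧ lam [] = 0 ∧
      (∀ p ∈ P, p ∈ W ∧ p ∈ Sl (j :: js) a ∧ p j ∈ B) ∧ (js.length < k → P = []) ∧
      ∀ x ∈ Sl (j :: js) a, x j ∈ J → θ =ᶠ[L (k+2) x] (P.map (u (j :: js))).sum + d lam

lemma Sol.mono {j : Fin n} {js : List (Fin n)} {k : ℕ} {a : Fin n → ℝ} {W : Set (Fin n → ℝ)}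
    {θ : Co (Fin n → ℝ)} {B B' J J' : Set ℝ} (h : Sol j js k a W θ B J) (hB : B ⊆ B')
    (hJ : J' ⊆ J) : Sol j js k a W θ B' J' := by
  obtain ⟨P, lam, h1, h2, h3, h4, h5⟩ := h
  exact ⟨P, lam, h1, h2, fun p hp => ⟨(h3 p hp).1, (h3 p hp).2.1, hB (h3 p hp).2.2⟩, h4,
    fun x hx hxJ => h5 x hx (hJ hxJ)⟩

lemma glue {j : Fin n} {js : List (Fin n)} (hj : j ∉ js) {k : ℕ} (IH : Gd js k)
    {a : Fin n → ℝ} {W : Set (Fin n → ℝ)} (hW : IsOpen W)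
    {θ : Co (Fin n → ℝ)} {s : ℝ} {J : Set ℝ} (hs : s ∈ J)
    (h1 : Sol j js k a W θ (Iio s) (Iic s)) (h2 : ∃ lam, CS W (k+1) lam ∧ lam [] = 0 ∧
      ∀ x ∈ Sl (j :: js) a, x j ∈ J → θ =ᶠ[L (k+2) x] d lam) :
    Sol j js k a W θ (Iic s) (Iic s ∪ (J ∩ Ici s)) := by
  obtain ⟨P, l1, c1, n1, p1, e1, q1⟩ := h1
  obtain ⟨l2, c2, n2, q2⟩ := h2
  have hu : ∀ x : Fin n → ℝ, s ≤ x j → ∀ m, (P.map (u (j :: js))).sum =ᶠ[L m x] 0 := by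
    intro x hx m
    apply sum_eq_zero
    intro p hp
    exact u_zero m ⟨j, by simp, ((p1 p hp).2.2.trans_le hx).ne'⟩
  obtain ⟨C, hC, hCW, hC0⟩ := c1.add c2
  obtain ⟨P', mu, c3, n3, p3, e3, q3⟩ := IH (Function.update a j s) W (l1 + l2) C hW hC hCW
    (fun x _ hx => hC0 x hx) (by
      intro x hx
      rw [mem_Sl_update hj] at hx
      have g1 := q1 x hx.1 hx.2.le
      have g2 := q2 x hx.1 (hx.2 ▸ hs)
      filter_upwards [g1, g2, hu x hx.2.ge _] with l g1 g2 g3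
      rw [d_add]
      simp only [Pi.add_apply, g3, Pi.zero_apply, zero_add] at g1 ⊢
      rw [← g1, ← g2, z2])
  have e2 : ∀ l2 : Co (Fin n → ℝ), cut (fun x => 1 + χ j s x) l2 = 
      fun l => (cut (fun _ => 1) l2 + cut (χ j s) l2) l := by
    intro l2; funext l; cases l with
    | nil => simp [cut]
    | cons a l => simp [cut]; ring
  refine ⟨P ++ P', cut (χ j s) l1 + (l2 + cut (χ j s) l2) + E (χ j s) mu, ?_, ?_, ?_, ?_, ?_⟩
  · exact ((c1.cut _).add (c2.add (c2.cut _))).add (c3.E _)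
  · simp [cut, E, n2]
  · intro p hp
    rcases List.mem_append.1 hp with hp | hp
    · exact ⟨(p1 p hp).1, (p1 p hp).2.1, le_of_lt (show p j < s from (p1 p hp).2.2)⟩
    · have := (p3 p hp).2
      rw [mem_Sl_update hj] at this
      exact ⟨(p3 p hp).1, this.1, this.2.le⟩
  · intro h
    simp [e1 h, e3 h]
  · intro x hx hxJ
    have hp' : ∀ p ∈ P', p j = s := fun p hp => by
      have := (p3 p hp).2
      rw [mem_Sl_update hj] at this
      exact this.2
    have hu' : x j ≠ s → (P'.map (u (j :: js))).sum =ᶠ[L (k+2) x] 0 := by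
      intro hne
      apply sum_eq_zero
      intro p hp
      exact u_zero _ ⟨j, by simp, by rwa [hp' p hp]⟩
    rw [List.map_append, List.sum_append]
    rcases lt_trichotomy (x j) s with hlt | heq | hgt
    · have t1 := d_eq (cut_const (m := k) (η := l1) (χ_lt hlt))
      have t2 := d_eq (cut_const (m := k) (η := l2) (χ_lt hlt))
      have t3 := d_eq (E_const (m := k+1) n3 (χ_lt hlt))
      filter_upwards [t1, t2, t3, q1 x hx hlt.le, hu' hlt.ne] with l t1 t2 t3 t4 t5
      simp only [d_add, Pi.add_apply, t1, t2, t3, t4, t5, one_mul, d_zero, Pi.zero_apply]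
      have := z2 (d l2 l)
      linear_combination -this
    · have hEs : (P'.map (u (j :: js))).sum = E (χ j s) (P'.map (u js)).sum := by
        rw [E_sum]
        congr 1
        apply List.map_congr_left
        intro p hp
        rw [u, hp' p hp]
      have hx' : x ∈ Sl js (Function.update a j s) := by
        rw [mem_Sl_update hj]; exact ⟨hx, heq⟩
      have t1 := E_eq (χ j s) (q3 x hx')
      have t2 := q1 x hx heq.le
      have t3 := q2 x hx (heq ▸ hs)
      have t4 := hu x heq.ge (k+2)
      have t2' : θ =ᶠ[L (k+2) x] d l1 := by
        filter_upwards [t2, t4] with l t2 t4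
        simpa [t4] using t2
      have t5 := cut_eq (χ j s) (t2'.symm.trans t3)
      filter_upwards [t1, t2', t3, t4, t5] with l t1 t2 t3 t4 t5
      rw [hEs]
      simp only [d_add, d_cut, d_E, E_add, Pi.add_apply, t4, t5, Pi.zero_apply] at t1 ⊢
      have h1 := z2 (cut (χ j s) (d l2) l)
      have h2 := z2 (E (χ j s) (P'.map (u js)).sum l)
      have h3 := z2 (E (χ j s) (d mu) l)
      linear_combination t3 - t1 - h1 - h2 - h3
    · have hJ : x j ∈ J := by
        rcases hxJ with h | h
        · exact absurd h (not_le.2 hgt)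
        · exact h.1
      have t1 := d_eq (cut_const (m := k) (η := l1) (χ_gt hgt))
      have t2 := d_eq (cut_const (m := k) (η := l2) (χ_gt hgt))
      have t3 := d_eq (E_const (m := k+1) n3 (χ_gt hgt))
      filter_upwards [t1, t2, t3, q2 x hx hJ, hu' hgt.ne', hu x hgt.le _] with l t1 t2 t3 t4 t5 t6
      simp only [d_add, Pi.add_apply, t1, t2, t3, t4, t5, t6, d_zero, Pi.zero_apply, d_smul]
      ring

lemma slab {j : Fin n} {js : List (Fin n)} (hj : j ∉ js) {k : ℕ} (hk : js.length ≤ k)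
    (IH : Gd js (k+1))
    {a : Fin n → ℝ} {W : Set (Fin n → ℝ)} (hW : IsOpen W)
    {θ : Co (Fin n → ℝ)} {C : Set (Fin n → ℝ)} (hC : IsCompact C) (hCW : C ⊆ W)
    (h0 : ∀ x ∈ Sl (j :: js) a, x ∉ C → θ =ᶠ[L (k+2) x] 0)
    (hd : ∀ x ∈ Sl (j :: js) a, d θ =ᶠ[L (k+3) x] 0) (t : ℝ) :
    ∃ O : Set ℝ, IsOpen O ∧ t ∈ O ∧ ∃ lam, CS W (k+1) lam ∧ lam [] = 0 ∧
      ∀ x ∈ Sl (j :: js) a, x j ∈ O → θ =ᶠ[L (k+2) x] d lam := by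
  obtain ⟨P, lam, c, n0, -, e, q⟩ := IH (Function.update a j t) W θ C hW hC hCW
    (fun x hx => h0 x ((mem_Sl_update hj).1 hx).1) (fun x hx => hd x ((mem_Sl_update hj).1 hx).1)
  have hP := e (by omega)
  subst hP
  obtain ⟨C', hC', hCW', hl⟩ := id c
  set G : Set (Fin n → ℝ) := {x | θ =ᶠ[L (k+2) x] d lam} with hG
  have hGo : IsOpen G := isOpen_iff_mem_nhds.2 fun x hx => L_nhds hx
  set B := ((C ∪ C') ∩ Sl (j :: js) a) \ G with hB
  have hBc : IsCompact B := ((hC.union hC').inter_right (isClosed_Sl _ _)).diff hGo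
  have hcl := (hBc.image (continuous_apply j)).isClosed
  refine ⟨((fun x : Fin n → ℝ => x j) '' B)ᶜ, hcl.isOpen_compl, ?_, lam, c, n0, ?_⟩
  · rintro ⟨x, hx, hxt⟩
    apply hx.2
    have := q x ((mem_Sl_update hj).2 ⟨hx.1.2, hxt⟩)
    show θ =ᶠ[L (k+2) x] d lam
    simpa using this
  · intro x hx hxO
    by_contra hne
    by_cases hxC : x ∈ C ∪ C'
    · exact hxO ⟨x, ⟨⟨hxC, hx⟩, hne⟩, rfl⟩
    · apply hne
      have := d_eq0 (hl x fun h => hxC (Or.inr h))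
      exact (h0 x hx fun h => hxC (Or.inl h)).trans this.symm

lemma Gd_cons {j : Fin n} {js : List (Fin n)} (hj : j ∉ js)
    (IH : ∀ k, js.length ≤ k → Gd js k) (k : ℕ) (hk : js.length ≤ k) : Gd (j :: js) (k+1) := by
  intro a W θ C hW hC hCW h0 hd
  have hb : ∃ R : ℝ, ∀ x ∈ C, -R < x j ∧ x j < R := by
    obtain ⟨R, hR⟩ := (hC.image (continuous_apply j)).isBounded.exists_norm_le
    refine ⟨R + 1, fun x hx => ?_⟩
    have := hR (x j) ⟨x, hx, rfl⟩
    rw [Real.norm_eq_abs, abs_le] at this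
    constructor <;> linarith
  obtain ⟨R, hR⟩ := hb
  by_cases hRR : -R ≤ R
  swap
  · -- `C` is empty
    have hCe : ∀ x, x ∉ C := fun x hx => by have := hR x hx; linarith
    exact ⟨[], 0, CS.zero _ _, rfl, by simp, by simp, fun x hx => by simpa using h0 x hx (hCe x)⟩
  choose O hO htO hsl using slab hj hk (IH (k+1) (by omega)) hW hC hCW h0 hd
  obtain ⟨t, ht0, htm, ⟨N, hN⟩, htc⟩ := exists_monotone_Icc_subset_open_cover_Icc hRR
    (c := fun i : ℝ => (Subtype.val ⁻¹' (O i) : Set (Icc (-R) R)))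
    (fun i => (hO i).preimage continuous_subtype_val)
    (fun x _ => mem_iUnion.2 ⟨x, htO x⟩)
  have key : ∀ m, Sol j js k a W θ (Iio (t m : ℝ)) (Iic (t m : ℝ)) := by
    intro m
    induction m with
    | zero =>
      refine ⟨[], 0, CS.zero _ _, rfl, by simp, by simp, fun x hx hxj => ?_⟩
      have : x ∉ C := fun h => by
        have := (hR x h).1
        rw [ht0] at hxj
        exact absurd hxj (not_le.2 this)
      simpa using h0 x hx this
    | succ m ih =>
      have hmono : t m ≤ t (m+1) := htm (Nat.le_succ m)
      rcases hmono.eq_or_lt with heq | hlt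
      · rwa [← heq]
      · obtain ⟨i, hi⟩ := htc m
        have hs : (t m : ℝ) ∈ O i := hi ⟨le_rfl, hmono⟩
        have := glue hj (IH k hk) hW hs ih (hsl i)
        refine this.mono (fun y hy => lt_of_le_of_lt (show y ≤ (t m : ℝ) from hy)
          (show (t m : ℝ) < t (m+1) from hlt)) ?_
        intro y hy
        by_cases hys : y ≤ t m
        · exact Or.inl hys
        · push Not at hys
          have hyI : y ∈ Icc (-R) R := ⟨(t m).2.1.trans hys.le, hy.trans (t (m+1)).2.2⟩
          exact Or.inr ⟨hi (show (⟨y, hyI⟩ : Icc (-R) R) ∈ Icc (t m) (t (m+1)) from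
            ⟨hys.le, hy⟩), hys.le⟩
  have hfin := key N
  rw [hN N le_rfl] at hfin
  have := glue hj (IH k hk) hW (J := Ici R) (s := R) (by simp) hfin
    ⟨0, CS.zero _ _, rfl, fun x hx hxj => by
      have : x ∉ C := fun h => absurd hxj (not_le.2 (hR x h).2)
      simpa using h0 x hx this⟩
  obtain ⟨P, lam, g1, g2, g3, g4, g5⟩ := this
  refine ⟨P, lam, g1, g2, fun p hp => ⟨(g3 p hp).1, (g3 p hp).2.1⟩, fun h => g4 (by simpa using h),
    fun x hx => g5 x hx ?_⟩
  rcases le_total (x j) R with h | h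
  · exact Or.inl h
  · exact Or.inr ⟨h, h⟩

theorem Gd_all (js : List (Fin n)) (hnd : js.Nodup) : ∀ k, js.length ≤ k → Gd js k := by
  induction js with
  | nil => exact fun k _ => Gd_nil k
  | cons j js ih =>
    rw [List.nodup_cons] at hnd
    intro k hk
    cases k with
    | zero => simp at hk
    | succ k => exact Gd_cons hnd.1 (ih hnd.2) k (by simpa using hk)

/-- The standard point class. -/
noncomputable def pc (p : Fin n → ℝ) : Co (Fin n → ℝ) := u (List.finRange n) p

lemma pc_zero {p x : Fin n → ℝ} (m : ℕ) (h : x ≠ p) : pc p =ᶠ[L m x] 0 := by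
  apply u_zero
  by_contra hc
  push Not at hc
  exact h (funext fun i => hc i (List.mem_finRange i))

lemma pc_cocycle (p x : Fin n → ℝ) : d (pc p) =ᶠ[L (n + 2) x] 0 := by
  have := u_cocycle (List.finRange n) p x
  rwa [List.length_finRange] at this

/-- Every compactly supported top degree cocycle is a sum of point classes. -/
theorem top_class {W : Set (Fin n → ℝ)} (hW : IsOpen W) {θ : Co (Fin n → ℝ)}
    (h0 : CS W (n+1) θ) (hd : ∀ x, d θ =ᶠ[L (n+2) x] 0) :
    ∃ (P : List (Fin n → ℝ)) (lam : Co (Fin n → ℝ)), CS W n lam ∧ 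
      (∀ p ∈ P, p ∈ W) ∧ ∀ x, θ =ᶠ[L (n+1) x] (P.map pc).sum + d lam := by
  obtain ⟨C, hC, hCW, h0⟩ := h0
  obtain ⟨P, lam, h1, -, h2, -, h3⟩ := Gd_all (List.finRange n) (List.nodup_finRange n) n (by simp)
    0 W θ C hW hC hCW (fun x _ => h0 x) (fun x _ => hd x)
  exact ⟨P, lam, h1, fun p hp => (h2 p hp).1, fun x => h3 x fun i hi =>
    absurd (List.mem_finRange i) hi⟩

end OneEnd

namespace OneEnd

/-- `η` vanishes on lists whose head is not in `B`. -/
def HS {X : Type*} (B : Set X) (η : Co X) : Prop :=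
  η [] = 0 ∧ ∀ a, a ∉ B → ∀ l, η (a :: l) = 0

lemma trunc {X : Type*} [TopologicalSpace X] [LocallyCompactSpace X] {W : Set X} (hW : IsOpen W)
    {m : ℕ} (hm : 0 < m) {η : Co X} (h : CS W m η) :
    ∃ (C : Set X) (η' : Co X), IsCompact C ∧ C ⊆ W ∧ HS C η' ∧ ∀ x, η' =ᶠ[L m x] η := by
  obtain ⟨m, rfl⟩ : ∃ k, m = k + 1 := ⟨m - 1, by omega⟩
  obtain ⟨C, hC, hCW, h⟩ := h
  obtain ⟨C', hC', h1, h2⟩ := exists_compact_between hC hW hCW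
  refine ⟨C', cut (ind C') η, hC', h2, ⟨rfl, fun a ha l => by simp [cut, ind_not_mem ha]⟩,
    fun x => ?_⟩
  by_cases hx : x ∈ C
  · exact cut_ind_mem (mem_interior_iff_mem_nhds.1 (h1 hx))
  · have := cut_eq (ind C') (h x hx)
    rw [cut_zero] at this
    exact this.trans (h x hx).symm

variable {n : ℕ}

/-- shift in direction `j` -/
def sh (h : ℝ) (j : Fin n) : (Fin n → ℝ) → (Fin n → ℝ) := fun x => x + Pi.single j h

/-- iterated prism -/
def PP (h : ℝ) : List (Fin n) → Co (Fin n → ℝ) → Co (Fin n → ℝ)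
  | [], η => η
  | j :: js, η => pr id (sh h j) (PP h js η)

lemma PP_append (h : ℝ) (js : List (Fin n)) (j : Fin n) (η : Co (Fin n → ℝ)) :
    PP h (js ++ [j]) η = PP h js (pr id (sh h j) η) := by
  induction js with
  | nil => rfl
  | cons i js ih => simp [PP, ih]

lemma PP_add (h : ℝ) (js : List (Fin n)) (η ζ : Co (Fin n → ℝ)) :
    PP h js (η + ζ) = PP h js η + PP h js ζ := by
  induction js with
  | nil => rfl
  | cons i js ih => simp [PP, ih, pr_add]

lemma PP_zero (h : ℝ) (js : List (Fin n)) : PP h js 0 = 0 := by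
  induction js with
  | nil => rfl
  | cons i js ih => simp [PP, ih]

lemma pr_comp_map {X : Type*} (f g : X → X) (η : Co X) (hfg : ∀ x, f (g x) = g (f x)) (l : List X) :
    pr id f (fun l => η (l.map g)) l = pr id f η (l.map g) := by
  induction l generalizing η with
  | nil => rfl
  | cons a l ih =>
    rw [List.map_cons, pr_cons, pr_cons]
    have := ih (fun l' => η (g a :: l'))
    simp only [id, List.map_cons, List.map_map] at this ⊢
    rw [this]
    congr 3
    simp [hfg]

lemma PP_map (h : ℝ) (js : List (Fin n)) (j : Fin n) (η : Co (Fin n → ℝ)) :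
    PP h js (fun l => η (l.map (sh h j))) = fun l => PP h js η (l.map (sh h j)) := by
  induction js with
  | nil => rfl
  | cons i js ih =>
    funext l
    simp only [PP, ih]
    exact pr_comp_map _ _ _ (fun x => by simp only [sh]; abel) _

lemma pr_HS {X : Type*} {B : Set X} {η : Co X} (g : X → X) (h : HS B η) : HS B (pr id g η) := by
  refine ⟨rfl, fun a ha l => ?_⟩
  have e : (fun l' => η (id a :: l')) = 0 := funext fun l' => h.2 a ha l'
  rw [pr_cons, e, pr_zero]
  simp [h.2 a ha]

lemma PP_HS {B : Set (Fin n → ℝ)} {η : Co (Fin n → ℝ)} (h : ℝ) (js : List (Fin n)) (hB : HS B η) :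
    HS B (PP h js η) := by
  induction js with
  | nil => exact hB
  | cons i js ih => exact pr_HS _ ih

lemma PP_small {h : ℝ} (hh : 0 ≤ h) (js : List (Fin n)) {η : Co (Fin n → ℝ)} {x : Fin n → ℝ}
    (r : ℝ) (m : ℕ)
    (H : ∀ l : List (Fin n → ℝ), l.length = m + js.length →
      (∀ a ∈ l, dist a x ≤ r + js.length * h) → η l = 0) :
    ∀ l : List (Fin n → ℝ), l.length = m → (∀ a ∈ l, dist a x ≤ r) → PP h js η l = 0 := by
  induction js generalizing r m with
  | nil => intro l h1 h2; exact H l (by simpa using h1) (by simpa using h2)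
  | cons j js ih =>
    intro l h1 h2
    have : pr id (sh h j) (PP h js η) l = pr id (sh h j) 0 l := by
      apply pr_congr
      intro l' hl' hm
      refine ih (r + h) (m+1) ?_ l' (by omega) ?_
      · intro l hl hx
        refine H l (by simp; omega) fun a ha => (hx a ha).trans (by simp; linarith)
      · intro b hb
        obtain ⟨a, ha, hab⟩ := hm b hb
        rcases hab with rfl | rfl
        · exact (h2 _ ha).trans (by linarith)
        · have h3 : dist (sh h j a) a ≤ h := by
            simp only [sh, dist_self_add_left]
            rw [Pi.norm_single, Real.norm_eq_abs, abs_of_nonneg hh]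
          have := dist_triangle (sh h j a) a x
          linarith [h2 a ha]
    rw [PP, this]; simp

/-- lattice point -/
def lat (h : ℝ) (z : Fin n → ℤ) : Fin n → ℝ := fun i => h * z i

def HT (f : (Fin n → ℤ) → ZMod 2) (c : ZMod 2) : Prop :=
  (Function.support f).Finite ∧ ∑ᶠ z, f z = c

lemma HT.add {f g : (Fin n → ℤ) → ZMod 2} {a b : ZMod 2} (hf : HT f a) (hg : HT g b) :
    HT (fun z => f z + g z) (a + b) := by
  refine ⟨(hf.1.union hg.1).subset (Function.support_add _ _), ?_⟩
  rw [finsum_add_distrib hf.1 hg.1, hf.2, hg.2]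

lemma HT.comp {f : (Fin n → ℤ) → ZMod 2} {a : ZMod 2} (hf : HT f a)
    (e : (Fin n → ℤ) ≃ (Fin n → ℤ)) : HT (fun z => f (e z)) a := by
  refine ⟨?_, ?_⟩
  · have : (Function.support fun z => f (e z)) = e ⁻¹' (Function.support f) := rfl
    rw [this]
    exact hf.1.preimage e.injective.injOn
  · rw [← hf.2]
    exact finsum_comp_equiv e

lemma HT.zero : HT (fun _ : Fin n → ℤ => 0) 0 := ⟨by simp, by simp⟩

lemma finite_lat {h : ℝ} (hh : 0 < h) {B : Set (Fin n → ℝ)} (hB : Bornology.IsBounded B) :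
    (lat h ⁻¹' B).Finite := by
  obtain ⟨R, hR⟩ := hB.exists_norm_le
  have : lat h ⁻¹' B ⊆ Set.pi univ fun _ : Fin n => Icc (-⌈R / h⌉) ⌈R / h⌉ := by
    intro z hz i _
    have h1 := (norm_le_pi_norm (lat h z) i).trans (hR _ hz)
    rw [Real.norm_eq_abs, abs_le] at h1
    simp only [lat] at h1
    have h2 : (z i : ℝ) ≤ R / h := by rw [le_div_iff₀ hh]; linarith
    have h3 : -(z i : ℝ) ≤ R / h := by rw [le_div_iff₀ hh]; linarith
    have h4 := Int.le_ceil (R / h)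
    constructor
    · have : (-(z i) : ℝ) ≤ ⌈R/h⌉ := h3.trans h4
      have : -(z i) ≤ ⌈R/h⌉ := by exact_mod_cast this
      omega
    · exact_mod_cast h2.trans h4
  exact (Set.Finite.pi' fun _ => Set.finite_Icc _ _).subset (fun z hz i => this hz i (mem_univ i))

lemma lat_shift (h : ℝ) (z : Fin n → ℤ) (j : Fin n) :
    lat h (z + Pi.single j 1) = sh h j (lat h z) := by
  funext i
  by_cases hi : i = j
  · subst hi; simp [lat, sh]; ring
  · simp [lat, sh, hi]

lemma trace_d {h : ℝ} (hh : 0 < h) {B : Set (Fin n → ℝ)} (hB : Bornology.IsBounded B)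
    (js : List (Fin n)) : ∀ η : Co (Fin n → ℝ), HS B η →
    HT (fun z => PP h js (d η) [lat h z]) 0 := by
  induction js using List.reverseRecOn with
  | nil =>
    intro η hη
    have : (fun z : Fin n → ℤ => PP h [] (d η) [lat h z]) = fun _ => 0 := by
      funext z
      simp [PP, d_cons, hη.1]
    rw [this]; exact HT.zero
  | append_singleton js j ih =>
    intro η hη
    have e : pr id (sh h j) (d η) =
        d (pr id (sh h j) η) + (η + fun l => η (l.map (sh h j))) := by
      funext l
      have h1 := d_pr id (sh h j) η l
      have h2 := z2 (d (pr id (sh h j) η) l)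
      simp only [Pi.add_apply, List.map_id] at h1 ⊢
      linear_combination h1 - h2
    rw [PP_append, e]
    simp only [PP_add, PP_map, Pi.add_apply, List.map_cons, List.map_nil]
    have t1 := ih _ (pr_HS (sh h j) hη)
    have t2 : HT (fun z => PP h js η [lat h z]) (∑ᶠ z, PP h js η [lat h z]) := by
      refine ⟨(finite_lat hh hB).subset ?_, rfl⟩
      intro z hz
      by_contra hc
      exact hz ((PP_HS h js hη).2 _ hc _)
    have t3 := t2.comp (Equiv.addRight (Pi.single j 1))
    simp only [Equiv.coe_addRight, lat_shift] at t3
    have := t1.add (t2.add t3)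
    rw [z2, add_zero] at this
    exact this

lemma pr_cut {X : Type*} {g : X → X} {s : X → ZMod 2} (η : Co X) :
    pr id g (cut s η) = cut s (pr id g η) := by
  funext l
  cases l with
  | nil => rfl
  | cons a l =>
    rw [pr_cons]
    have : (fun l' => cut s η (id a :: l')) = fun l' => s a * (fun l'' => η (a :: l'')) l' := rfl
    rw [this, pr_smul]
    simp only [cut, id, pr_cons]
    ring

lemma pr_E {X : Type*} {g : X → X} {s : X → ZMod 2} (hs : ∀ x, s (g x) = s x) {η : Co X} :
    pr id g (E s η) = E s (pr id g η) := by
  funext l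
  cases l with
  | nil => rfl
  | cons a l =>
    rw [pr_cons]
    have : (fun l' => E s η (id a :: l')) =
      (fun l' => s a * η l') + cut s η := rfl
    rw [this, pr_add, Pi.add_apply, pr_smul, pr_cut]
    simp only [E, id, cut, hs]
    have := z2 (s a * η (g a :: l.map g))
    linear_combination this

lemma PP_E {h : ℝ} {js : List (Fin n)} {j : Fin n} (hj : j ∉ js) (t : ℝ) (η : Co (Fin n → ℝ)) :
    PP h js (E (χ j t) η) = E (χ j t) (PP h js η) := by
  induction js with
  | nil => rfl
  | cons i js ih =>
    simp only [List.mem_cons, not_or] at hj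
    simp only [PP, ih hj.2]
    apply pr_E
    intro x
    have : sh h i x j = x j := by simp [sh, hj.1]
    simp [χ, ind, this]

lemma PP_u {h : ℝ} {js : List (Fin n)} (hnd : js.Nodup) (p x : Fin n → ℝ) :
    PP h js (u js p) [x] = (js.map fun j => χ j (p j) x + χ j (p j) (sh h j x)).prod := by
  induction js generalizing x with
  | nil => simp [PP, u]
  | cons j js ih =>
    rw [List.nodup_cons] at hnd
    rw [PP, u, PP_E hnd.1, pr_cons]
    simp only [pr_nil, E, cut, List.map_nil, id, ih hnd.2, add_zero, List.map_cons, List.prod_cons]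
    rw [← add_mul]
    congr 2
    apply List.map_congr_left
    intro i hi
    have hij : i ≠ j := fun h => hnd.1 (h ▸ hi)
    have e1 : sh h j x i = x i := by simp [sh, hij]
    have e2 : sh h i (sh h j x) i = sh h i x i := by simp [sh, hij]
    simp [χ, ind, e1, e2]

lemma fac {h : ℝ} (hh : 0 < h) (p : Fin n → ℝ) (z : Fin n → ℤ) (j : Fin n) :
    χ j (p j) (lat h z) + χ j (p j) (sh h j (lat h z)) = if z j = ⌈p j / h⌉ - 1 then 1 else 0 := by
  have e1 : sh h j (lat h z) j = h * (z j + 1) := by simp [sh, lat]; ring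
  have a1 : h * z j < p j ↔ z j < ⌈p j / h⌉ := by
    rw [Int.lt_ceil, lt_div_iff₀ hh, mul_comm]
  have a2 : h * (z j + 1) < p j ↔ z j + 1 < ⌈p j / h⌉ := by
    rw [Int.lt_ceil, lt_div_iff₀ hh, mul_comm]; push_cast; rfl
  have e0 : lat h z j = h * z j := rfl
  simp only [χ, ind, mem_ofPred_eq, e1, e0, a1, a2]
  split_ifs <;> first | omega | decide

lemma trace_pc {h : ℝ} (hh : 0 < h) (p : Fin n → ℝ) :
    HT (fun z => PP h (List.finRange n) (pc p) [lat h z]) 1 := by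
  set z0 : Fin n → ℤ := fun j => ⌈p j / h⌉ - 1 with hz0
  have e : (fun z => PP h (List.finRange n) (pc p) [lat h z]) = fun z => if z = z0 then 1 else 0 := by
    funext z
    rw [pc, PP_u (List.nodup_finRange n)]
    simp only [fac hh]
    split_ifs with hz
    · subst hz
      apply List.prod_eq_one
      intro x hx
      obtain ⟨j, -, rfl⟩ := List.mem_map.1 hx
      simp [hz0]
    · have : ∃ j, z j ≠ z0 j := by
        by_contra hc; push Not at hc; exact hz (funext hc)
      obtain ⟨j, hj⟩ := this
      apply List.prod_eq_zero
      refine List.mem_map.2 ⟨j, List.mem_finRange j, ?_⟩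
      rw [if_neg hj]
  rw [e]
  refine ⟨(Set.finite_singleton z0).subset ?_, ?_⟩
  · intro z hz
    by_contra hc
    have : z ≠ z0 := hc
    simp [this] at hz
  · rw [finsum_eq_single _ z0 (by intro z hz; simp [hz])]; simp

lemma u_zero_list {js : List (Fin n)} {p : Fin n → ℝ} {j : Fin n} (hj : j ∈ js) {c : ZMod 2}
    {l : List (Fin n → ℝ)} (h : ∀ a ∈ l, χ j (p j) a = c) : u js p l = 0 := by
  induction js generalizing l with
  | nil => simp at hj
  | cons i js ih =>
    rcases List.mem_cons.1 hj with rfl | hj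
    · match l, h with
      | [], _ => rfl
      | [a], _ => simp [u, E, cut]
      | a :: b :: l, h =>
        have ha := h a (by simp)
        have hb := h b (by simp)
        simp [u, E, cut, ha, hb, z2]
    · match l, h with
      | [], _ => rfl
      | [a], _ => simp [u, E, cut]
      | a :: b :: l, h =>
        have := ih hj (l := b :: l) (fun c hc => h c (by simp [hc]))
        simp [u, E, cut, this]

lemma pc_far {p x : Fin n → ℝ} (hx : 1 ≤ dist x p) {l : List (Fin n → ℝ)}
    (hl : ∀ a ∈ l, dist a x < 1) : pc p l = 0 := by
  have : ∃ j, 1 ≤ dist (x j) (p j) := by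
    by_contra hc
    push Not at hc
    exact absurd ((dist_pi_lt_iff one_pos).2 hc) (not_lt.2 hx)
  obtain ⟨j, hj⟩ := this
  have hl' : ∀ a ∈ l, |a j - x j| < 1 := fun a ha => (dist_le_pi_dist a x j).trans_lt (hl a ha)
  rw [Real.dist_eq, le_abs] at hj
  rcases hj with hj | hj
  · refine u_zero_list (List.mem_finRange j) (c := 0) fun a ha => ind_not_mem ?_
    have := abs_lt.1 (hl' a ha)
    simp only [mem_ofPred_eq, not_lt]; linarith
  · refine u_zero_list (List.mem_finRange j) (c := 1) fun a ha => ind_mem ?_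
    have := abs_lt.1 (hl' a ha)
    simp only [mem_ofPred_eq]; linarith

/-- The trace argument: an odd number of point classes does not bound. -/
theorem TR (hn : 1 ≤ n) {Ps : List (Fin n → ℝ)} {η : Co (Fin n → ℝ)} (hη : CS univ n η)
    (h : ∀ x, (Ps.map pc).sum =ᶠ[L (n+1) x] d η) : Even Ps.length := by
  obtain ⟨C, η₁, hC, -, hS, hη₁⟩ := trunc isOpen_univ hn hη
  have hk : ∀ x, (Ps.map pc).sum + d η₁ =ᶠ[L (n+1) x] 0 := by
    intro x
    filter_upwards [h x, d_eq (hη₁ x)] with l h1 h2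
    rw [Pi.add_apply, h1, h2, z2]; rfl
  set κ := (Ps.map pc).sum + d η₁ with hκ
  set K0 : Set (Fin n → ℝ) := C ∪ {p | p ∈ Ps} with hK0
  have hK0c : IsCompact K0 := hC.union (List.finite_toSet Ps).isCompact
  have hK1c : IsCompact (Metric.cthickening 1 K0) := hK0c.cthickening
  have hleb : ∃ ε > 0, ε ≤ 1 ∧ ∀ x, ∀ l : List (Fin n → ℝ), l.length = n + 1 →
      (∀ a ∈ l, dist a x < ε) → κ l = 0 := by
    choose O hO hOl using fun x => eqL.1 (hk x)
    obtain ⟨δ, hδ, hδ'⟩ := lebesgue_number_lemma_of_metric (c := fun x => interior (O x)) hK1c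
      (fun _ => isOpen_interior)
      (fun x _ => mem_iUnion.2 ⟨x, mem_interior_iff_mem_nhds.2 (hO x)⟩)
    refine ⟨min δ 1, lt_min hδ one_pos, min_le_right _ _, fun x l hl hd => ?_⟩
    by_cases hx : x ∈ Metric.cthickening 1 K0
    · obtain ⟨i, hi⟩ := hδ' x hx
      exact hOl i l hl fun a ha => interior_subset (hi ((hd a ha).trans_le (min_le_left _ _)))
    · have hfar : ∀ y ∈ K0, 1 < dist x y := by
        intro y hy
        by_contra hc
        push Not at hc
        exact hx (Metric.mem_cthickening_of_dist_le x y 1 K0 hy hc)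
      have hd1 : ∀ a ∈ l, dist a x < 1 := fun a ha => (hd a ha).trans_le (min_le_right _ _)
      have e1 : d η₁ l = 0 := by
        have : d η₁ l = d 0 l := by
          apply d_congr
          intro l' hl' hm'
          match l', hl', hm' with
          | [], _, _ => exact hS.1
          | a :: l', _, hm' =>
            apply hS.2
            intro ha
            have := hfar a (Or.inl ha)
            rw [dist_comm] at this
            exact absurd (hd1 a (hm' a (by simp))) (not_lt.2 this.le)
        rw [this]; simp
      have e2 : (Ps.map pc).sum l = 0 := by
        have := sum_eq_zero (F := pure l) Ps pc (fun p hp => by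
          have : pc p l = 0 := pc_far (hfar p (Or.inr hp)).le hd1
          simpa [EventuallyEq] using this)
        simpa [EventuallyEq] using this
      rw [hκ, Pi.add_apply, e1, e2, add_zero]
  obtain ⟨ε, hε, -, hεk⟩ := hleb
  set h : ℝ := ε / (n + 1) with hh
  have hhp : 0 < h := by positivity
  have t0 : ∀ x, PP h (List.finRange n) κ [x] = 0 := by
    intro x
    refine PP_small hhp.le (List.finRange n) (x := x) 0 1 ?_ [x] rfl (by simp)
    intro l hl hd
    refine hεk x l (by rw [hl]; simp; omega) fun a ha => (hd a ha).trans_lt ?_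
    simp only [List.length_finRange, zero_add, hh]
    rw [mul_div_assoc', div_lt_iff₀ (by positivity)]
    nlinarith
  have t1 := trace_d hhp hC.isBounded (List.finRange n) η₁ hS
  have t2 : ∀ Qs : List (Fin n → ℝ),
      HT (fun z => PP h (List.finRange n) (Qs.map pc).sum [lat h z]) Qs.length := by
    intro Qs
    induction Qs with
    | nil => simpa [PP_zero] using HT.zero
    | cons q Qs ih =>
      have := (trace_pc hhp q).add ih
      simp only [List.map_cons, List.sum_cons, PP_add, Pi.add_apply, List.length_cons]
      push_cast
      rw [add_comm (1 : ZMod 2)] at this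
      exact this
  have t3 := (t2 Ps).add t1
  have e : (fun z => PP h (List.finRange n) (Ps.map pc).sum [lat h z] +
      PP h (List.finRange n) (d η₁) [lat h z]) = fun _ => 0 := by
    funext z
    rw [← t0 (lat h z), hκ, PP_add]; rfl
  rw [e] at t3
  have := t3.2
  simp only [finsum_zero, add_zero] at this
  exact (ZMod.natCast_eq_zero_iff_even).1 this.symm

end OneEnd

namespace OneEnd

lemma zz {X : Type*} (η : Co X) : η + η = 0 := funext fun l => z2 (η l)

lemma map_self {X : Type*} {f : X → X} {l : List X} (h : ∀ a ∈ l, f a = a) : l.map f = l := by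
  conv_rhs => rw [← List.map_id l]
  exact List.map_congr_left h

section Bd
variable {X : Type*} [TopologicalSpace X] {n : ℕ}

/-- `θ` bounds with compact supports in `W`. -/
def Bd (n : ℕ) (W : Set X) (θ : Co X) : Prop :=
  ∃ η, CS W n η ∧ ∀ x, θ =ᶠ[L (n+1) x] d η

lemma Bd.zero (W : Set X) : Bd n W 0 := ⟨0, CS.zero _ _, fun x => by simp⟩

lemma Bd.add {W : Set X} {θ θ' : Co X} (h : Bd n W θ) (h' : Bd n W θ') : Bd n W (θ + θ') := by
  obtain ⟨η, h1, h2⟩ := h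
  obtain ⟨η', h1', h2'⟩ := h'
  exact ⟨η + η', h1.add h1', fun x => by rw [d_add]; exact (h2 x).add (h2' x)⟩

lemma Bd.mono {W W' : Set X} {θ : Co X} (h : Bd n W θ) (hW : W ⊆ W') : Bd n W' θ := by
  obtain ⟨η, h1, h2⟩ := h
  exact ⟨η, h1.mono hW, h2⟩

lemma Bd.congr {W : Set X} {θ θ' : Co X} (h : Bd n W θ) (e : ∀ x, θ' =ᶠ[L (n+1) x] θ) :
    Bd n W θ' := by
  obtain ⟨η, h1, h2⟩ := h
  exact ⟨η, h1, fun x => (e x).trans (h2 x)⟩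

lemma Bd.symm {W : Set X} {a b : Co X} (h : Bd n W (a + b)) : Bd n W (b + a) := by
  rwa [add_comm]

lemma Bd.trans {W : Set X} {a b c : Co X} (h : Bd n W (a + b)) (h' : Bd n W (b + c)) :
    Bd n W (a + c) := by
  have := h.add h'
  have e : a + b + (b + c) = a + c := by
    have := zz b
    linear_combination (exp := 1) this
  rwa [e] at this

lemma Bd.of_add {W : Set X} {a b : Co X} (h : Bd n W (a + b)) (h' : Bd n W b) : Bd n W a := by
  have h0 : Bd n W (b + 0) := by simpa using h'
  simpa using h.trans h0

lemma Bd.refl {W : Set X} (a : Co X) : Bd n W (a + a) := by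
  rw [zz]; exact Bd.zero _

lemma Bd.sum {ι : Type*} {W : Set X} {P : List ι} {f g : ι → Co X}
    (h : ∀ p ∈ P, Bd n W (f p + g p)) : Bd n W ((P.map f).sum + (P.map g).sum) := by
  induction P with
  | nil => simpa using Bd.zero _
  | cons p P ih =>
    have := (h p (by simp)).add (ih fun q hq => h q (by simp [hq]))
    simp only [List.map_cons, List.sum_cons]
    rwa [add_add_add_comm]

end Bd

lemma sum_const {X ι : Type*} (P : List ι) (c : Co X) :
    (Even P.length → (P.map fun _ => c).sum = 0) ∧ (¬ Even P.length → (P.map fun _ => c).sum = c) := by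
  induction P with
  | nil => simp
  | cons p P ih =>
    simp only [List.length_cons, List.map_cons, List.sum_cons, Nat.even_add_one, not_not]
    constructor
    · intro h; rw [ih.2 h, zz]
    · intro h; rw [ih.1 h, add_zero]

section transfer
variable {Y Z : Type*} [TopologicalSpace Y] [TopologicalSpace Z]

lemma transfer [T2Space Y] [LocallyCompactSpace Z] (ψ : OpenPartialHomeomorph Y Z) {W : Set Z}
    (hW : IsOpen W) (hWt : W ⊆ ψ.target) {m : ℕ} (hm : 0 < m) {θ : Co Z} (h : CS W m θ) :
    ∃ θ' : Co Y, CS (ψ.source ∩ ψ ⁻¹' W) m θ' ∧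
      ∀ y ∈ ψ.source, θ' =ᶠ[L m y] fun l => θ (l.map ψ) := by
  obtain ⟨C, θ₁, hC, hCW, hS, hθ⟩ := trunc hW hm h
  obtain ⟨m, rfl⟩ : ∃ k, m = k + 1 := ⟨m - 1, by omega⟩
  have hCt : C ⊆ ψ.target := hCW.trans hWt
  have hC' : IsCompact (ψ.symm '' C) := hC.image_of_continuousOn (ψ.continuousOn_symm.mono hCt)
  refine ⟨cut (ind ψ.source) fun l => θ₁ (l.map ψ), ⟨ψ.symm '' C, hC', ?_, ?_⟩, ?_⟩
  · rintro _ ⟨z, hz, rfl⟩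
    exact ⟨ψ.map_target (hCt hz), by simpa [ψ.right_inv (hCt hz)] using hCW hz⟩
  · intro y hy
    filter_upwards [L_cons, L_mem (hC'.isClosed.isOpen_compl.mem_nhds hy)] with l hl hl'
    obtain ⟨a, l, rfl, -⟩ := hl
    have ha : a ∉ ψ.symm '' C := hl' a (by simp)
    by_cases has : a ∈ ψ.source
    · have : ψ a ∉ C := fun h => ha ⟨ψ a, h, ψ.left_inv has⟩
      simp [cut, hS.2 _ this]
    · simp [cut, ind_not_mem has]
  · intro y hy
    refine (cut_ind_mem (ψ.open_source.mem_nhds hy)).trans ?_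
    exact map_eq (ψ.continuousAt hy) (hθ _)

end transfer

section manifold
variable {n : ℕ} {M : Type*} [TopologicalSpace M] [T2Space M]

def PtCls (φ : OpenPartialHomeomorph M (Fin n → ℝ)) (p : M) (ω : Co M) : Prop :=
  ω =ᶠ[L (n+1) p] (fun l => pc (φ p) (l.map φ)) ∧ ∀ x, x ≠ p → ω =ᶠ[L (n+1) x] 0

lemma exists_PtCls (φ : OpenPartialHomeomorph M (Fin n → ℝ)) {p : M} (hp : p ∈ φ.source) :
    ∃ ω, PtCls φ p ω := by
  obtain ⟨ω, ⟨C, -, hC, h0⟩, h⟩ := transfer φ φ.open_target subset_rfl (Nat.succ_pos n) (θ := pc (φ p))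
    ⟨{φ p}, isCompact_singleton, by simpa using φ.map_source hp, fun x hx => pc_zero _ (by simpa using hx)⟩
  refine ⟨ω, h p hp, fun x hx => ?_⟩
  by_cases hxs : x ∈ φ.source
  · refine (h x hxs).trans ?_
    have hne : φ x ≠ φ p := fun e => hx (φ.injOn hxs hp e)
    exact map_eq (φ.continuousAt hxs) (pc_zero (n+1) hne)
  · exact h0 x fun hc => hxs (hC hc).1

open Classical in
noncomputable def cp (φ : OpenPartialHomeomorph M (Fin n → ℝ)) (p : M) : Co M :=
  if h : p ∈ φ.source then (exists_PtCls φ h).choose else 0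

lemma cp_spec (φ : OpenPartialHomeomorph M (Fin n → ℝ)) {p : M} (h : p ∈ φ.source) :
    PtCls φ p (cp φ p) := by
  unfold cp; rw [dif_pos h]; exact (exists_PtCls φ h).choose_spec

lemma cp_zero (φ : OpenPartialHomeomorph M (Fin n → ℝ)) {p x : M} (h : x ≠ p) :
    cp φ p =ᶠ[L (n+1) x] 0 := by
  by_cases hp : p ∈ φ.source
  · exact (cp_spec φ hp).2 x h
  · unfold cp; rw [dif_neg hp]

lemma cp_src (φ : OpenPartialHomeomorph M (Fin n → ℝ)) {p x : M} (hp : p ∈ φ.source)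
    (hx : x ∈ φ.source) : cp φ p =ᶠ[L (n+1) x] (fun l => pc (φ p) (l.map φ)) := by
  by_cases h : x = p
  · subst h; exact (cp_spec φ hp).1
  · have hne : φ x ≠ φ p := fun e => h (φ.injOn hx hp e)
    exact (cp_zero φ h).trans (map_eq (φ.continuousAt hx) (pc_zero (n+1) hne)).symm

lemma cp_cocycle (φ : OpenPartialHomeomorph M (Fin n → ℝ)) {p : M} (x : M) :
    d (cp φ p) =ᶠ[L (n+2) x] 0 := by
  by_cases h : x = p
  · subst h
    by_cases hp : x ∈ φ.source
    · refine (d_eq (cp_spec φ hp).1).trans ?_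
      have e : d (fun l : List M => pc (φ x) (l.map φ)) = fun l => d (pc (φ x)) (l.map φ) :=
        funext fun l => d_map _ _ l
      rw [e]
      exact map_eq (φ.continuousAt hp) (pc_cocycle _ _)
    · unfold cp; rw [dif_neg hp]; simp
  · exact d_eq0 (cp_zero φ h)

lemma cp_CS (φ : OpenPartialHomeomorph M (Fin n → ℝ)) {p : M} {W : Set M} (hp : p ∈ W) :
    CS W (n+1) (cp φ p) :=
  ⟨{p}, isCompact_singleton, by simpa using hp, fun x hx => cp_zero φ (by simpa using hx)⟩

lemma map_sum_apply {X Z ι : Type*} (P : List ι) (f : ι → Co Z) (g : X → Z) :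
    (fun l : List X => (P.map f).sum (l.map g)) = (P.map fun i => fun l : List X => f i (l.map g)).sum := by
  induction P with
  | nil => rfl
  | cons p P ih => 
    simp only [List.map_cons, List.sum_cons, ← ih]
    rfl

lemma sum_congr_ev {X ι : Type*} {F : Filter (List X)} {P : List ι} {f g : ι → Co X}
    (h : ∀ p ∈ P, f p =ᶠ[F] g p) : (P.map f).sum =ᶠ[F] (P.map g).sum := by
  induction P with
  | nil => rfl
  | cons p P ih =>
    simp only [List.map_cons, List.sum_cons]
    exact (h p (by simp)).add (ih fun q hq => h q (by simp [hq]))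

lemma CS_sum {X ι : Type*} [TopologicalSpace X] {W : Set X} {m : ℕ} {P : List ι} {f : ι → Co X}
    (h : ∀ p ∈ P, CS W m (f p)) : CS W m (P.map f).sum := by
  induction P with
  | nil => exact CS.zero _ _
  | cons p P ih =>
    simp only [List.map_cons, List.sum_cons]
    exact (h p (by simp)).add (ih fun q hq => h q (by simp [hq]))

lemma d_list_sum {X ι : Type*} (P : List ι) (f : ι → Co X) :
    d (P.map f).sum = (P.map fun i => d (f i)).sum := by
  induction P with
  | nil => simp
  | cons p P ih => simp [d_add, ih]

/-- top classes inside a chart -/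
lemma CL [LocallyCompactSpace M] (hn : 1 ≤ n) (φ : OpenPartialHomeomorph M (Fin n → ℝ)) {W : Set M}
    (hW : IsOpen W) (hWs : W ⊆ φ.source) {ω : Co M} (h0 : CS W (n+1) ω)
    (hd : ∀ x, d ω =ᶠ[L (n+2) x] 0) :
    ∃ P : List M, (∀ p ∈ P, p ∈ W) ∧ Bd n W (ω + (P.map (cp φ)).sum) := by
  obtain ⟨θ, hθ, hθe⟩ := transfer φ.symm hW hWs (Nat.succ_pos n) h0
  simp only [OpenPartialHomeomorph.symm_source] at hθ hθe
  set W' := φ.target ∩ φ.symm ⁻¹' W with hW'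
  have hW'o : IsOpen W' := φ.symm.isOpen_inter_preimage hW
  obtain ⟨P, lam, hl, hP, hs⟩ := top_class hW'o hθ (by
    intro z
    by_cases hz : z ∈ φ.target
    · refine (d_eq (hθe z hz)).trans ?_
      have e : d (fun l : List (Fin n → ℝ) => ω (l.map φ.symm)) = fun l => d ω (l.map φ.symm) :=
        funext fun l => d_map _ _ l
      rw [e]
      exact map_eq (φ.continuousAt_symm hz) (hd _)
    · obtain ⟨C, -, hC, h⟩ := hθ
      exact d_eq0 (h z fun hc => hz (hC hc).1))
  obtain ⟨lam', hl', hle⟩ := transfer φ hW'o inter_subset_left hn hl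
  have hsub : φ.source ∩ φ ⁻¹' W' ⊆ W := by
    rintro x ⟨hx, -, hx'⟩
    simpa [φ.left_inv hx] using hx'
  have hPs : ∀ p ∈ P, φ.symm p ∈ φ.source := fun p hp => φ.map_target (hP p hp).1
  refine ⟨P.map φ.symm, ?_, lam', hl'.mono hsub, ?_⟩
  · intro p hp
    obtain ⟨q, hq, rfl⟩ := List.mem_map.1 hp
    exact (hP q hq).2
  · intro x
    by_cases hx : x ∈ φ.source
    · have a1 : ω =ᶠ[L (n+1) x] fun l => θ (l.map φ) := by
        have := map_eq (φ.continuousAt hx) (hθe (φ x) (φ.map_source hx))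
        refine EventuallyEq.trans ?_ this.symm
        filter_upwards [L_mem (φ.open_source.mem_nhds hx)] with l hl
        rw [List.map_map]
        rw [map_self (f := φ.symm ∘ φ) fun a ha => φ.left_inv (hl a ha)]
      have a2 := map_eq (φ.continuousAt hx) (hs (φ x))
      have a3 : ((P.map φ.symm).map (cp φ)).sum =ᶠ[L (n+1) x] fun l => (P.map pc).sum (l.map φ) := by
        rw [map_sum_apply, List.map_map]
        apply sum_congr_ev
        intro p hp
        have := cp_src φ (hPs p hp) hx
        rwa [φ.right_inv (hP p hp).1] at this
      have a4 := d_eq (hle x hx)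
      filter_upwards [a1, a2, a3, a4] with l a1 a2 a3 a4
      rw [Pi.add_apply, a1, a2, a3, a4, d_map, Pi.add_apply]
      have := z2 ((P.map pc).sum (l.map φ))
      linear_combination this
    · obtain ⟨C, -, hC, h⟩ := h0
      obtain ⟨C', -, hC', h'⟩ := hl'
      have a1 := h x fun hc => hx (hWs (hC hc))
      have a2 := d_eq0 (h' x fun hc => hx (hC' hc).1)
      have a3 : ((P.map φ.symm).map (cp φ)).sum =ᶠ[L (n+1) x] 0 := by
        rw [List.map_map]
        apply sum_eq_zero
        intro p hp
        exact cp_zero φ fun e => hx (e ▸ hPs p hp)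
      filter_upwards [a1, a2, a3] with l a1 a2 a3
      rw [Pi.add_apply, a1, a2, a3]; simp

lemma CT [LocallyCompactSpace M] (hn : 1 ≤ n) (φ : OpenPartialHomeomorph M (Fin n → ℝ)) {P : List M}
    (hP : ∀ p ∈ P, p ∈ φ.source) (h : Bd n φ.source (P.map (cp φ)).sum) : Even P.length := by
  obtain ⟨η, hη, he⟩ := h
  obtain ⟨η', hη', he'⟩ := transfer φ.symm φ.open_source subset_rfl hn hη
  simp only [OpenPartialHomeomorph.symm_source] at hη' he'
  have := TR hn (Ps := P.map φ) (hη'.mono (subset_univ _)) (by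
    intro z
    rw [List.map_map]
    by_cases hz : z ∈ φ.target
    · have a1 := map_eq (φ.continuousAt_symm hz) (he (φ.symm z))
      have a2 := d_eq (he' z hz)
      have a3 : (P.map (pc ∘ φ)).sum =ᶠ[L (n+1) z] fun l => (P.map (cp φ)).sum (l.map φ.symm) := by
        rw [map_sum_apply]
        apply sum_congr_ev
        intro p hp
        have b1 := map_eq (φ.continuousAt_symm hz) (cp_src φ (hP p hp) (φ.map_target hz))
        refine EventuallyEq.trans ?_ b1.symm
        filter_upwards [L_mem (φ.open_target.mem_nhds hz)] with l hl
        rw [List.map_map, map_self (f := φ ∘ φ.symm) fun a ha => φ.right_inv (hl a ha)]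
        rfl
      filter_upwards [a1, a2, a3] with l a1 a2 a3
      rw [a3, a1, a2, d_map]
    · obtain ⟨C, -, hC, h⟩ := hη'
      have a1 := d_eq0 (h z fun hc => hz (hC hc).1)
      refine EventuallyEq.trans ?_ a1.symm
      apply sum_eq_zero
      intro p hp
      exact pc_zero _ fun e => hz (e ▸ φ.map_source (hP p hp)))
  simpa using this

end manifold

end OneEnd

namespace OneEnd

section cube
variable {n : ℕ}

lemma cube_u (js : List (Fin n)) (p q : Fin n → ℝ) :
    ∃ lam : Co (Fin n → ℝ), lam [] = 0 ∧
      (∀ x : Fin n → ℝ, (∃ j ∈ js, x j ∉ uIcc (p j) (q j)) → lam =ᶠ[L js.length x] 0) ∧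
      ∀ x, u js p + u js q =ᶠ[L (js.length + 1) x] d lam := by
  induction js with
  | nil =>
    refine ⟨0, rfl, by simp, fun x => ?_⟩
    have : u [] p + u [] q = 0 := zz _
    rw [this, d_zero]
  | cons j js ih =>
    obtain ⟨lam, h0, h1, h2⟩ := ih
    set σ : (Fin n → ℝ) → ZMod 2 := fun x => χ j (p j) x + χ j (q j) x with hσ
    refine ⟨E (χ j (p j)) lam + cut σ (u js q), rfl, ?_, ?_⟩
    · rintro x ⟨i, hi, hx⟩
      rcases List.mem_cons.1 hi with rfl | hi
      · replace hx : (x i < p i ∧ x i < q i) ∨ (p i < x i ∧ q i < x i) := by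
          rw [mem_uIcc] at hx
          push Not at hx
          rcases lt_or_ge (x i) (p i) with h | h
          · left
            refine ⟨h, ?_⟩
            by_contra hc
            push Not at hc
            linarith [hx.2 hc]
          · right
            have := hx.1 h
            refine ⟨?_, this⟩
            by_contra hc
            push Not at hc
            linarith [hx.2 this.le]
        have a1 : E (χ i (p i)) lam =ᶠ[L (js.length + 1) x] 0 := by
          obtain ⟨c, hc⟩ := χ_ne (t := p i) (x := x) (j := i) (by
            rcases hx with h | h
            · exact h.1.ne
            · exact h.1.ne')
          exact E_const h0 hc
        have a2 : ∀ᶠ y in 𝓝 x, σ y = 0 := by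
          rcases hx with h | h
          · filter_upwards [χ_lt h.1, χ_lt h.2] with y h1 h2
            rw [hσ]; simp only [h1, h2]; decide
          · filter_upwards [χ_gt h.1, χ_gt h.2] with y h1 h2
            rw [hσ]; simp only [h1, h2]; decide
        have a3 := cut_const (m := js.length) (η := u js q) a2
        filter_upwards [a1, a3] with l a1 a3
        rw [Pi.add_apply, a1, a3]; simp
      · have a1 := E_eq (χ j (p j)) (h1 x ⟨i, hi, hx⟩)
        have a2 : u js q =ᶠ[L (js.length + 1) x] 0 :=
          u_zero _ ⟨i, hi, fun e => hx (e ▸ right_mem_uIcc)⟩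
        have a3 := cut_eq σ a2
        rw [E_zero] at a1
        rw [cut_zero] at a3
        simpa using a1.add a3
    · intro x
      have a1 := E_eq (χ j (p j)) (h2 x)
      have a2 := cut_eq σ (u_cocycle js q x)
      rw [cut_zero] at a2
      filter_upwards [a1, a2] with l a1 a2
      have e : E σ (u js q) = E (χ j (p j)) (u js q) + E (χ j (q j)) (u js q) := by
        funext l
        match l with
        | [] => simp [E]
        | [a] => simp [E, cut, hσ]
        | a :: b :: l => simp [E, cut, hσ]; ring
      rw [d_add, d_cut, d_E, e]
      simp only [E_add, Pi.add_apply, u, a2, ← a1]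
      have := z2 (E (χ j (p j)) (u js q) l)
      simp only [Pi.zero_apply]
      linear_combination -this

lemma cube_pc {c p q : Fin n → ℝ} {r : ℝ} (hp : p ∈ Metric.ball c r) (hq : q ∈ Metric.ball c r) :
    Bd n (Metric.ball c r) (pc p + pc q) := by
  obtain ⟨lam, -, h1, h2⟩ := cube_u (List.finRange n) p q
  simp only [List.length_finRange] at h1 h2
  have hr : 0 < r := dist_nonneg.trans_lt hp
  refine ⟨lam, ⟨Set.pi univ fun j => uIcc (p j) (q j), isCompact_univ_pi fun j => isCompact_uIcc,
    ?_, ?_⟩, h2⟩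
  · intro x hx
    rw [Metric.mem_ball, dist_pi_lt_iff hr] at hp hq ⊢
    intro j
    have h3 := hp j
    have h4 := hq j
    have h5 := hx j (mem_univ j)
    rw [Real.dist_eq, abs_lt] at h3 h4 ⊢
    rcases mem_uIcc.1 h5 with h | h <;> constructor <;> linarith
  · intro x hx
    apply h1
    by_contra hc
    push Not at hc
    exact hx fun j _ => hc j (List.mem_finRange j)

end cube

section manifold
variable {n : ℕ} {M : Type*} [TopologicalSpace M] [T2Space M]

lemma cube_cp (hn : 1 ≤ n) (φ : OpenPartialHomeomorph M (Fin n → ℝ)) {c : Fin n → ℝ} {r : ℝ}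
    (hb : Metric.ball c r ⊆ φ.target) {p q : M} (hp : p ∈ φ.source ∩ φ ⁻¹' Metric.ball c r)
    (hq : q ∈ φ.source ∩ φ ⁻¹' Metric.ball c r) :
    Bd n (φ.source ∩ φ ⁻¹' Metric.ball c r) (cp φ p + cp φ q) := by
  obtain ⟨lam, hl, he⟩ := cube_pc hp.2 hq.2
  obtain ⟨lam', hl', he'⟩ := transfer φ Metric.isOpen_ball hb hn hl
  refine ⟨lam', hl', fun x => ?_⟩
  by_cases hx : x ∈ φ.source
  · filter_upwards [cp_src φ hp.1 hx, cp_src φ hq.1 hx, map_eq (φ.continuousAt hx) (he _),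
      d_eq (he' x hx)] with l a1 a2 a3 a4
    rw [a4, d_map, ← a3, Pi.add_apply, a1, a2]; rfl
  · obtain ⟨C, -, hC, h⟩ := hl'
    filter_upwards [cp_zero φ fun e : x = p => hx (e ▸ hp.1),
      cp_zero φ fun e : x = q => hx (e ▸ hq.1), d_eq0 (h x fun hc => hx (hC hc).1)] with l a1 a2 a3
    rw [Pi.add_apply, a1, a2, a3]; simp

lemma exists_cube (φ : OpenPartialHomeomorph M (Fin n → ℝ)) {p : M} (hp : p ∈ φ.source) {W : Set M}
    (hW : IsOpen W) (hpW : p ∈ W) : ∃ r > 0, Metric.ball (φ p) r ⊆ φ.target ∧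
      φ.source ∩ φ ⁻¹' Metric.ball (φ p) r ⊆ W := by
  have h1 := φ.symm.isOpen_inter_preimage hW
  obtain ⟨r, hr, h⟩ := Metric.isOpen_iff.1 h1 (φ p) ⟨φ.map_source hp, by
    simpa [φ.left_inv hp] using hpW⟩
  refine ⟨r, hr, h.trans inter_subset_left, ?_⟩
  rintro x ⟨hx, hx'⟩
  have := (h hx').2
  simpa [φ.left_inv hx] using this

lemma chart_indep [LocallyCompactSpace M] (hn : 1 ≤ n) (φ φ' : OpenPartialHomeomorph M (Fin n → ℝ))
    {p : M} (hp : p ∈ φ.source) (hp' : p ∈ φ'.source) {W : Set M} (hW : IsOpen W) (hpW : p ∈ W) :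
    Bd n W (cp φ p + cp φ' p) := by
  obtain ⟨r, hr, hb, hD⟩ := exists_cube φ hp (hW.inter φ'.open_source) ⟨hpW, hp'⟩
  set D := φ.source ∩ φ ⁻¹' Metric.ball (φ p) r with hDdef
  have hDo : IsOpen D := φ.isOpen_inter_preimage Metric.isOpen_ball
  have hpD : p ∈ D := ⟨hp, by simpa using hr⟩
  obtain ⟨P, hP, hPb⟩ := CL hn φ hDo inter_subset_left (cp_CS φ' hpD) (fun x => cp_cocycle φ' x)
  have h1 : Bd n D ((P.map (cp φ)).sum + (P.map fun _ => cp φ p).sum) :=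
    Bd.sum fun q hq => cube_cp hn φ hb (hP q hq) hpD
  have h2 := hPb.trans h1
  by_cases hev : Even P.length
  · rw [(sum_const P (cp φ p)).1 hev, add_zero] at h2
    have := CT hn φ' (P := [p]) (by simpa using hp') (by
      simpa using h2.mono (hD.trans inter_subset_right))
    simp at this
  · rw [(sum_const P (cp φ p)).2 hev] at h2
    exact h2.symm.mono (hD.trans inter_subset_left)

/-- existence of charts -/
def HasCh (n : ℕ) (M : Type*) [TopologicalSpace M] : Prop :=
  ∀ x : M, ∃ φ : OpenPartialHomeomorph M (Fin n → ℝ), x ∈ φ.source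

noncomputable def pt (H : HasCh n M) (p : M) : Co M := cp (H p).choose p

lemma pt_cp [LocallyCompactSpace M] (H : HasCh n M) (hn : 1 ≤ n)
    (φ : OpenPartialHomeomorph M (Fin n → ℝ))
    {p : M} (hp : p ∈ φ.source) {W : Set M} (hW : IsOpen W) (hpW : p ∈ W) :
    Bd n W (pt H p + cp φ p) :=
  chart_indep hn _ φ (H p).choose_spec hp hW hpW

lemma pt_connect [LocallyCompactSpace M] [PreconnectedSpace M] (H : HasCh n M) (hn : 1 ≤ n) (p q : M) :
    Bd n univ (pt H p + pt H q) := by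
  refine PreconnectedSpace.induction₂' (fun p q => Bd n univ (pt H p + pt H q)) ?_
    ⟨fun _ _ _ h1 h2 => h1.trans h2⟩ p q
  · intro p
    obtain ⟨φ, hp⟩ := H p
    obtain ⟨r, hr, hb, -⟩ := exists_cube φ hp isOpen_univ (mem_univ p)
    have hpD : p ∈ φ.source ∩ φ ⁻¹' Metric.ball (φ p) r := ⟨hp, by simpa using hr⟩
    filter_upwards [(φ.isOpen_inter_preimage Metric.isOpen_ball).mem_nhds hpD] with q hq
    have := ((pt_cp H hn φ hp isOpen_univ (mem_univ p)).trans
      ((cube_cp hn φ hb hpD hq).mono (subset_univ _))).trans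
        (pt_cp H hn φ hq.1 isOpen_univ (mem_univ q)).symm
    exact ⟨this, this.symm⟩

/-- parity property -/
def Par (H : HasCh n M) (W : Set M) : Prop :=
  ∀ s : List M, (∀ p ∈ s, p ∈ W) → Bd n W (s.map (pt H)).sum → Even s.length

lemma sum_filter {X ι : Type*} (s : List ι) (f : ι → Co X) (Q : ι → Bool) :
    (s.map f).sum = ((s.filter Q).map f).sum + ((s.filter fun x => !Q x).map f).sum ∧
      s.length = (s.filter Q).length + (s.filter fun x => !Q x).length := by
  induction s with
  | nil => simp
  | cons a s ih =>
    by_cases h : Q a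
    · constructor
      · simp [h, ih.1, add_assoc]
      · simp [h, ih.2]; omega
    · constructor
      · simp [h, ih.1, add_left_comm]
      · simp [h, ih.2]; omega

lemma CS.inter {X : Type*} [TopologicalSpace X] [T2Space X] {W W' : Set X} {m : ℕ} {η : Co X}
    (h : CS W m η) (h' : CS W' m η) : CS (W ∩ W') m η := by
  obtain ⟨C, hC, hW, h⟩ := h
  obtain ⟨C', hC', hW', h'⟩ := h'
  refine ⟨C ∩ C', hC.inter hC', inter_subset_inter hW hW', fun x hx => ?_⟩
  by_cases hx' : x ∈ C
  · exact h' x fun hc => hx ⟨hx', hc⟩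
  · exact h x hx'

lemma CS.congr {X : Type*} [TopologicalSpace X] {W : Set X} {m : ℕ} {η η' : Co X}
    (h : CS W m η) (e : ∀ x, η' =ᶠ[L m x] η) : CS W m η' := by
  obtain ⟨C, hC, hW, h⟩ := h
  exact ⟨C, hC, hW, fun x hx => (e x).trans (h x hx)⟩

lemma CS.split {X : Type*} [TopologicalSpace X] [T2Space X] [LocallyCompactSpace X] {W B : Set X}
    (hW : IsOpen W) (hB : IsOpen B) {m : ℕ} (hm : 0 < m) {η : Co X} (h : CS (W ∪ B) m η) :
    ∃ η₁ η₂ : Co X, CS W m η₁ ∧ CS B m η₂ ∧ η = η₁ + η₂ := by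
  obtain ⟨m, rfl⟩ : ∃ k, m = k + 1 := ⟨m - 1, by omega⟩
  obtain ⟨C, hC, hCW, h⟩ := h
  obtain ⟨K1, K2, c1, c2, s1, s2, e⟩ := hC.binary_compact_cover hW hB hCW
  obtain ⟨N, hN, hKN, hNW⟩ := exists_compact_between c1 hW s1
  have h0 : η = OneEnd.cut (ind N) η + (η + OneEnd.cut (ind N) η) := by
    rw [add_left_comm, zz, add_zero]
  refine ⟨OneEnd.cut (ind N) η, η + OneEnd.cut (ind N) η, ⟨N, hN, hNW, fun x hx => ?_⟩, ⟨K2, c2, s2, fun x hx => ?_⟩, h0⟩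
  · exact cut_ind_not_mem (hN.isClosed.isOpen_compl.mem_nhds hx)
  · by_cases hx1 : x ∈ K1
    · filter_upwards [cut_ind_mem (m := m) (η := η) (mem_interior_iff_mem_nhds.1 (hKN hx1))] with l hl
      rw [Pi.add_apply, hl, z2]; rfl
    · have h1 := h x (by rw [e]; exact fun hc => hc.elim hx1 hx)
      have h2 := cut_eq (ind N) h1
      rw [cut_zero] at h2
      simpa using h1.add h2

lemma Par_step [LocallyCompactSpace M] (H : HasCh n M) (hn : 1 ≤ n) {W : Set M} (hW : IsOpen W)
    (hPar : Par H W) (φ : OpenPartialHomeomorph M (Fin n → ℝ)) : Par H (W ∪ φ.source) := by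
  classical
  rintro s hs ⟨η, hη, he⟩
  obtain ⟨e1, e2⟩ := sum_filter s (pt H) (fun x => decide (x ∈ W))
  set s1 := s.filter fun x => decide (x ∈ W) with hs1
  set s2 := s.filter fun x => !decide (x ∈ W) with hs2
  have m1 : ∀ p ∈ s1, p ∈ W := by
    intro p hp; rw [hs1, List.mem_filter] at hp; simpa using hp.2
  have m2 : ∀ p ∈ s2, p ∈ φ.source := by
    intro p hp
    rw [hs2, List.mem_filter] at hp
    have : p ∉ W := by simpa using hp.2
    exact (hs p hp.1).resolve_left this
  obtain ⟨η₁, η₂, c1, c2, rfl⟩ := hη.split hW φ.open_source hn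
  set κ := (s1.map (pt H)).sum + d η₁ with hκ
  have hκ' : ∀ x, κ =ᶠ[L (n+1) x] (s2.map (pt H)).sum + d η₂ := by
    intro x
    filter_upwards [he x] with l hl
    rw [e1, d_add] at hl
    simp only [hκ, Pi.add_apply] at hl ⊢
    have h1 := z2 ((s2.map (pt H)).sum l)
    have h2 := z2 (d η₁ l)
    linear_combination hl - h1 + h2
  have k1 : CS W (n+1) κ := (CS_sum fun p hp => cp_CS _ (m1 p hp)).add c1.d
  have k2 : CS φ.source (n+1) κ :=
    CS.congr ((CS_sum fun p hp => cp_CS _ (m2 p hp)).add c2.d) hκ'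
  have kd : ∀ x, d κ =ᶠ[L (n+2) x] 0 := by
    intro x
    rw [hκ, d_add, d_d, add_zero, d_list_sum]
    exact sum_eq_zero _ _ fun p _ => cp_cocycle _ x
  obtain ⟨P, hP, hPb⟩ := CL hn φ (hW.inter φ.open_source) inter_subset_right (k1.inter k2) kd
  have b1 : Bd n (W ∩ φ.source) ((P.map (pt H)).sum + (P.map (cp φ)).sum) :=
    Bd.sum fun p hp => pt_cp H hn φ (hP p hp).2 (hW.inter φ.open_source) (hP p hp)
  have b2 : Bd n φ.source ((s2.map (pt H)).sum + (s2.map (cp φ)).sum) :=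
    Bd.sum fun p hp => pt_cp H hn φ (m2 p hp) φ.open_source (m2 p hp)
  have g1 : Even (P.length + s1.length) := by
    have : Bd n W ((P.map (pt H)).sum + (s1.map (pt H)).sum) := by
      have a1 : Bd n W ((P.map (pt H)).sum + κ) := (b1.trans hPb.symm).mono inter_subset_left
      refine a1.trans (b := κ) ⟨η₁, c1, fun x => ?_⟩
      rw [hκ, add_right_comm, zz, zero_add]
    have := hPar (P ++ s1) (by
      intro p hp
      rcases List.mem_append.1 hp with h | h
      · exact (hP p h).1
      · exact m1 p h) (by simpa using this)
    simpa using this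
  have g2 : Even (P.length + s2.length) := by
    have : Bd n φ.source ((P.map (cp φ)).sum + (s2.map (cp φ)).sum) := by
      have a1 : Bd n φ.source ((P.map (cp φ)).sum + κ) := hPb.symm.mono inter_subset_right
      have a2 : Bd n φ.source (κ + (s2.map (pt H)).sum) := by
        refine ⟨η₂, c2, fun x => ?_⟩
        filter_upwards [hκ' x] with l hl
        rw [Pi.add_apply, hl, Pi.add_apply]
        have h1 := z2 ((s2.map (pt H)).sum l)
        linear_combination h1
      exact (a1.trans a2).trans b2
    have := CT hn φ (P := P ++ s2) (by
      intro p hp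
      rcases List.mem_append.1 hp with h | h
      · exact (hP p h).2
      · exact m2 p h) (by simpa using this)
    simpa using this
  rw [e2]
  rw [Nat.even_add] at g1 g2 ⊢
  exact g1.symm.trans g2

lemma Par_univ [LocallyCompactSpace M] (H : HasCh n M) (hn : 1 ≤ n) : Par H (univ : Set M) := by
  rintro s - ⟨η, ⟨C, hC, -, h0⟩, he⟩
  have H' := H
  choose φ hφ using H'
  have hK : IsCompact (C ∪ {p | p ∈ s}) := hC.union (List.finite_toSet s).isCompact
  obtain ⟨t, -, ht⟩ := hK.elim_nhds_subcover (fun x => (φ x).source)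
    (fun x _ => (φ x).open_source.mem_nhds (hφ x))
  have key : ∀ t : Finset M, IsOpen (⋃ x ∈ t, (φ x).source) ∧ Par H (⋃ x ∈ t, (φ x).source) := by
    intro t
    classical
    induction t using Finset.induction_on with
    | empty =>
      refine ⟨by simp, fun s hs _ => ?_⟩
      cases s with
      | nil => simp
      | cons a s => simpa using hs a (by simp)
    | insert a t _ ih =>
      rw [Finset.set_biUnion_insert, union_comm]
      exact ⟨ih.1.union (φ a).open_source, Par_step H hn ih.1 ih.2 (φ a)⟩
  exact (key t).2 s (fun p hp => ht (Or.inr hp)) ⟨η, ⟨C, hC, subset_union_left.trans ht, h0⟩, he⟩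

end manifold
end OneEnd

namespace OneEnd

section manifold
variable {M : Type*} [TopologicalSpace M]

lemma homotopy_local {F : unitInterval × M → M} (hF : Continuous F) {K : Set M} (hK : IsCompact K)
    {m : ℕ} {η : Co M} (hd : ∀ t, ∀ x ∈ K, d η =ᶠ[L (m+1) (F (t, x))] 0) (t : unitInterval) :
    ∀ᶠ s in 𝓝 t, ∃ ζ : Co M, ∀ x ∈ K,
      (fun l : List M => η (l.map fun a => F (t, a)) + η (l.map fun a => F (s, a))) =ᶠ[L m x] d ζ := by
  have key : ∀ᶠ s in 𝓝 t, ∀ x ∈ K,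
      pr (fun a => F (t, a)) (fun a => F (s, a)) (d η) =ᶠ[L m x] 0 := by
    refine hK.eventually_forall_of_forall_eventually ?_
    intro x hx
    obtain ⟨O, hO, hOl⟩ := eqL.1 (hd t x hx)
    have h1 : F ⁻¹' O ∈ 𝓝 (t, x) := hF.continuousAt hO
    rw [nhds_prod_eq, Filter.mem_prod_iff] at h1
    obtain ⟨A, hA, V, hV, hAV⟩ := h1
    rw [nhds_prod_eq]
    filter_upwards [Filter.prod_mem_prod hA (interior_mem_nhds.2 hV)] with z hz
    refine eqL.2 ⟨V, mem_interior_iff_mem_nhds.1 hz.2, fun l hl hm => ?_⟩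
    have : pr (fun a => F (t, a)) (fun a => F (z.1, a)) (d η) l =
        pr (fun a => F (t, a)) (fun a => F (z.1, a)) 0 l := by
      apply pr_congr
      intro l' hl' hm'
      refine hOl l' (by omega) fun b hb => ?_
      obtain ⟨a, ha, hab⟩ := hm' b hb
      rcases hab with rfl | rfl
      · exact hAV ⟨mem_of_mem_nhds hA, hm a ha⟩
      · exact hAV ⟨hz.1, hm a ha⟩
    rw [this, pr_zero]
  filter_upwards [key] with s hs
  refine ⟨pr (fun a => F (t, a)) (fun a => F (s, a)) η, fun x hx => ?_⟩
  filter_upwards [hs x hx] with l hl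
  rw [← d_pr, hl]; simp

lemma homotopy_kill {F : unitInterval × M → M} (hF : Continuous F) (hF0 : ∀ x, F (0, x) = x) (y : M)
    (hF1 : ∀ x, F (1, x) = y) {K : Set M} (hK : IsCompact K)
    {m : ℕ} {η : Co M} (hd : ∀ t, ∀ x ∈ K, d η =ᶠ[L (m+1) (F (t, x))] 0) :
    ∃ ζ : Co M, ∀ x ∈ K, η =ᶠ[L m x] d ζ := by
  rcases K.eq_empty_or_nonempty with rfl | ⟨x0, hx0⟩
  · exact ⟨0, by simp⟩
  have h01 := PreconnectedSpace.induction₂' (fun t s : unitInterval => ∃ ζ : Co M, ∀ x ∈ K,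
      (fun l : List M => η (l.map fun a => F (t, a)) + η (l.map fun a => F (s, a))) =ᶠ[L m x] d ζ)
    (by
      intro t
      filter_upwards [homotopy_local hF hK hd t] with s hs
      refine ⟨hs, ?_⟩
      simpa only [add_comm] using hs)
    ⟨by
      rintro a b c ⟨ζ, h⟩ ⟨ζ', h'⟩
      refine ⟨ζ + ζ', fun x hx => ?_⟩
      filter_upwards [h x hx, h' x hx] with l h1 h2
      rw [d_add, Pi.add_apply, ← h1, ← h2]
      have := z2 (η (l.map fun a => F (b, a)))
      linear_combination -this⟩ 0 1
  obtain ⟨ζ, h⟩ := h01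
  have hc := hd 1 x0 hx0
  rw [hF1] at hc
  have hc' := cone_eq hc
  refine ⟨ζ + fun l => η (y :: l.map fun _ => y), fun x hx => ?_⟩
  have h2 := map_eq (f := fun _ : M => y) (x := x) continuousAt_const hc'
  filter_upwards [h x hx, h2] with l h1 h2
  have e : d (fun l : List M => η (y :: l.map fun _ => y)) l =
      d (fun l' => η (y :: l')) (l.map fun _ => y) :=
    d_map (fun _ : M => y) (fun l' => η (y :: l')) l
  simp only [hF0, hF1, List.map_id'] at h1
  rw [d_add, Pi.add_apply, ← h1, e, ← h2]
  have := z2 (η (l.map fun _ => y))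
  linear_combination -this

variable {n : ℕ} [T2Space M] [LocallyCompactSpace M] [PreconnectedSpace M]

lemma core (H : HasCh n M) (hn : 2 ≤ n) {F : unitInterval × M → M} (hF : Continuous F)
    (hF0 : ∀ x, F (0, x) = x) (y : M) (hF1 : ∀ x, F (1, x) = y) {K : Set M} (hK : IsCompact K)
    {U V : Set M} (hU : IsOpen U) (hV : IsOpen V) (hUV : Disjoint U V) (hc : U ∪ V = Kᶜ) :
    ∃ C, IsCompact C ∧ (U ⊆ C ∨ V ⊆ C) := by
  by_contra hcon
  push Not at hcon
  have hH : IsCompact (F '' (univ ×ˢ K)) := (isCompact_univ.prod hK).image hF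
  obtain ⟨hUn, hVn⟩ := hcon _ hH
  obtain ⟨p, hpU, hpH⟩ := not_subset.1 hUn
  obtain ⟨q, hqV, hqH⟩ := not_subset.1 hVn
  obtain ⟨η, hη, he⟩ := pt_connect H (by omega) p q
  have p0 : ∀ {p x : M}, x ≠ p → pt H p =ᶠ[L (n+1) x] 0 := fun h => cp_zero _ h
  obtain ⟨ζ, hζ⟩ := homotopy_kill hF hF0 y hF1 hK (m := n) (η := η) (by
    intro t x hx
    have hm : F (t, x) ∈ F '' (univ ×ˢ K) := ⟨(t, x), ⟨mem_univ _, hx⟩, rfl⟩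
    filter_upwards [he (F (t, x)), p0 (p := p) fun e => hpH (e ▸ hm),
      p0 (p := q) fun e => hqH (e ▸ hm)] with l h1 h2 h3
    rw [← h1, Pi.add_apply, h2, h3]; simp)
  obtain ⟨N, hN, hKN⟩ := exists_compact_superset hK
  obtain ⟨k, rfl⟩ : ∃ k, n = k + 2 := ⟨n - 2, by omega⟩
  have hζ' : CS univ (k+1) (cut (ind N) ζ) :=
    ⟨N, hN, subset_univ _, fun x hx => cut_ind_not_mem (hN.isClosed.isOpen_compl.mem_nhds hx)⟩
  set η₁ := η + d (cut (ind N) ζ) with hη₁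
  have c1 : CS univ (k+2) η₁ := hη.add hζ'.d
  have z1 : ∀ x ∈ K, η₁ =ᶠ[L (k+2) x] 0 := by
    intro x hx
    have := d_eq (cut_ind_mem (m := k) (η := ζ) (mem_interior_iff_mem_nhds.1 (hKN hx)))
    filter_upwards [this, hζ x hx] with l h1 h2
    rw [hη₁, Pi.add_apply, h1, h2, z2]; rfl
  have d1 : d η₁ = d η := by rw [hη₁, d_add, d_d, add_zero]
  have := Par_univ H (by omega) [q] (by simp) ⟨cut (ind V) η₁, c1.cut _, by
    intro x
    simp only [List.map_cons, List.map_nil, List.sum_cons, List.sum_nil, add_zero]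
    by_cases hxK : x ∈ K
    · have h1 := cut_eq (ind V) (z1 x hxK)
      rw [cut_zero] at h1
      have hq : x ≠ q := by
        rintro rfl
        have : x ∈ Kᶜ := hc ▸ Or.inr hqV
        exact this hxK
      exact (p0 hq).trans (d_eq0 h1).symm
    · have hx : x ∈ U ∪ V := hc ▸ hxK
      rcases hx with hx | hx
      · have h1 : cut (ind V) η₁ =ᶠ[L (k+2) x] 0 := cut_ind_not_mem
          (mem_of_superset (hU.mem_nhds hx) (disjoint_left.1 hUV))
        have hq : x ≠ q := by
          rintro rfl
          exact disjoint_left.1 hUV hx hqV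
        exact (p0 hq).trans (d_eq0 h1).symm
      · have h1 := d_eq (cut_ind_mem (m := k+1) (η := η₁) (hV.mem_nhds hx))
        rw [d1] at h1
        have hp : x ≠ p := by
          rintro rfl
          exact disjoint_left.1 hUV hpU hx
        filter_upwards [h1, he x, p0 hp] with l h1 h2 h3
        rw [h1, ← h2, Pi.add_apply, h3]; simp⟩
  simp at this

theorem wrap [LocallyConnectedSpace M]
    (hcore : ∀ K U V : Set M, IsCompact K → IsOpen U → IsOpen V → Disjoint U V → U ∪ V = Kᶜ →
      ∃ C, IsCompact C ∧ (U ⊆ C ∨ V ⊆ C)) (K : Set M) (hK : IsCompact K) :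
    ∃ K' : Set M, IsCompact K' ∧ K ⊆ K' ∧ IsPreconnected K'ᶜ := by
  rcases K.eq_empty_or_nonempty with rfl | hKne
  · exact ⟨∅, isCompact_empty, subset_rfl, by simpa using isPreconnected_univ⟩
  obtain ⟨A, hA, hKA⟩ := exists_compact_superset hK
  have hKo : IsOpen Kᶜ := hK.isClosed.isOpen_compl
  set C : M → Set M := fun x => connectedComponentIn Kᶜ x with hC
  have hCo : ∀ x, IsOpen (C x) := fun x => hKo.connectedComponentIn
  have hCK : ∀ x, C x ⊆ Kᶜ := fun x => connectedComponentIn_subset _ _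
  have hself : ∀ {x}, x ∈ Kᶜ → x ∈ C x := fun h => mem_connectedComponentIn h
  have hCeq : ∀ {x y}, y ∈ C x → C x = C y := fun h => connectedComponentIn_eq h
  have hAcl : IsClosed A := hA.isClosed
  have claim : ∀ x ∈ Kᶜ, x ∉ A → (C x ∩ frontier A).Nonempty := by
    intro x hx hxA
    by_contra hne
    rw [not_nonempty_iff_eq_empty] at hne
    have hsub : C x ⊆ interior A ∪ Aᶜ := by
      intro z hz
      by_cases hzA : z ∈ A
      · left
        by_contra hzi
        have : z ∈ C x ∩ frontier A := ⟨hz, by rw [hAcl.frontier_eq]; exact ⟨hzA, hzi⟩⟩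
        rw [hne] at this
        exact this
      · exact Or.inr hzA
    have hsub2 : C x ⊆ Aᶜ := by
      refine isPreconnected_connectedComponentIn.subset_right_of_subset_union isOpen_interior
        hAcl.isOpen_compl ?_ hsub ⟨x, hself hx, hxA⟩
      exact disjoint_left.2 fun z hz hz' => hz' (interior_subset hz)
    have hcl : IsClosed (C x) := by
      rw [← closure_subset_iff_isClosed]
      intro z hz
      have hzK : z ∈ Kᶜ := by
        intro hzK
        obtain ⟨w, hw1, hw2⟩ := mem_closure_iff.1 hz _ isOpen_interior (hKA hzK)
        exact hsub2 hw2 (interior_subset hw1)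
      obtain ⟨w, hw1, hw2⟩ := mem_closure_iff.1 hz _ (hCo z) (hself hzK)
      rw [hCeq hw2, ← hCeq hw1]
      exact hself hzK
    have huniv := IsClopen.eq_univ ⟨hcl, hCo x⟩ ⟨x, hself hx⟩
    obtain ⟨k, hk⟩ := hKne
    exact hCK x (huniv ▸ mem_univ k) hk
  have hfr : IsCompact (frontier A) := hA.of_isClosed_subset isClosed_frontier hAcl.frontier_subset
  have hfrK : frontier A ⊆ Kᶜ := fun z hz hzK => hz.2 (hKA hzK)
  obtain ⟨t, ht, htc⟩ := hfr.elim_nhds_subcover C fun x hx => (hCo x).mem_nhds (hself (hfrK hx))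
  have hcov : ∀ z, z ∈ A ∨ ∃ x ∈ t, z ∈ C x := by
    intro z
    by_cases hzA : z ∈ A
    · exact Or.inl hzA
    right
    have hzK : z ∈ Kᶜ := fun h => hzA (interior_subset (hKA h))
    obtain ⟨w, hw, hwf⟩ := claim z hzK hzA
    obtain ⟨x, hx, hwx⟩ := mem_iUnion₂.1 (htc hwf)
    refine ⟨x, hx, ?_⟩
    rw [hCeq hwx, ← hCeq hw]
    exact hself hzK
  have hVo : ∀ x, IsOpen (Kᶜ \ C x) := by
    intro x
    rw [isOpen_iff_mem_nhds]
    intro z hz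
    refine mem_of_superset ((hCo z).mem_nhds (hself hz.1)) fun w hw => ⟨hCK z hw, fun hw' => hz.2 ?_⟩
    rw [hCeq hw', ← hCeq hw]
    exact hself hz.1
  have hx : ∀ x, ∃ D, IsCompact D ∧ (C x ⊆ D ∨ Kᶜ \ C x ⊆ D) := fun x =>
    hcore K (C x) (Kᶜ \ C x) hK (hCo x) (hVo x) disjoint_sdiff_right (union_diff_cancel (hCK x))
  by_cases hex : ∃ x D, IsCompact D ∧ Kᶜ \ C x ⊆ D
  · obtain ⟨x, D, hD, hxD⟩ := hex
    refine ⟨(C x)ᶜ, (hK.union hD).of_isClosed_subset (hCo x).isClosed_compl ?_, ?_, ?_⟩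
    · intro z hz
      by_cases hzK : z ∈ K
      · exact Or.inl hzK
      · exact Or.inr (hxD ⟨hzK, hz⟩)
    · intro z hz hz'
      exact hCK x hz' hz
    · rw [compl_compl]
      exact isPreconnected_connectedComponentIn
  · have hx' : ∀ x, ∃ D, IsCompact D ∧ C x ⊆ D := by
      intro x
      obtain ⟨D, hD, h⟩ := hx x
      rcases h with h | h
      · exact ⟨D, hD, h⟩
      · exact absurd ⟨x, D, hD, h⟩ hex
    choose D hD hCD using hx'
    refine ⟨univ, ?_, subset_univ _, by simpa using isPreconnected_empty⟩
    have : IsCompact (A ∪ ⋃ x ∈ t, D x) := hA.union (t.isCompact_biUnion fun x _ => hD x)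
    convert this
    symm
    rw [eq_univ_iff_forall]
    intro z
    rcases hcov z with h | ⟨x, hx, h⟩
    · exact Or.inl h
    · exact Or.inr (mem_iUnion₂.2 ⟨x, hx, hCD x h⟩)

end manifold

theorem final {n : ℕ} (hn : 2 ≤ n)
    {M : Type*} [TopologicalSpace M] [T2Space M]
    [ChartedSpace (EuclideanSpace ℝ (Fin n)) M] [ContractibleSpace M] (K : Set M) (hK : IsCompact K) :
      ∃ K' : Set M, IsCompact K' ∧ K ⊆ K' ∧ IsPreconnected K'ᶜ := by
  haveI : LocallyCompactSpace M := ChartedSpace.locallyCompactSpace (EuclideanSpace ℝ (Fin n)) M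
  haveI : LocallyConnectedSpace M :=
    ChartedSpace.locallyConnectedSpace (EuclideanSpace ℝ (Fin n)) M
  have H : HasCh n M := fun x =>
    ⟨(chartAt (EuclideanSpace ℝ (Fin n)) x).transHomeomorph
      (EuclideanSpace.equiv (Fin n) ℝ).toHomeomorph, by simp⟩
  obtain ⟨y, ⟨F⟩⟩ := id_nullhomotopic M
  refine wrap (fun K U V hK hU hV hUV hc => ?_) K hK
  exact core H hn (F := F) F.continuous (fun x => by simp) y (fun x => by simp) hK hU hV hUV hc

end OneEnd

end

/-- A contractible topological `n`-manifold without boundary with `n ≥ 2` has one end: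
for every compact subset `K` there is a compact subset `K'` containing `K` whose
complement is connected (the empty set counting as connected). -/
theorem one_end_of_contractible {n : ℕ} (hn : 2 ≤ n)
    {M : Type*} [TopologicalSpace M] [T2Space M]
    [ChartedSpace (EuclideanSpace ℝ (Fin n)) M] [ContractibleSpace M] :
    ∀ K : Set M, IsCompact K →
      ∃ K' : Set M, IsCompact K' ∧ K ⊆ K' ∧ IsPreconnected K'ᶜ := by
  exact fun K hK => OneEnd.final hn K hK
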